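/- arXiv:1807.09653 — 4 statements merged into one kernel-verified Lean document; each statement's English description precedes it below -/
import Mathlib

section
/- Analytic dependence on the spectral parameter: let [s,t] ⊂ (a,b), let x0, x ∈ (s,t), u0 ∈ ℂⁿ, and let Ω = {λ ∈ ℂ : for every t' ∈ [s,t], both matrices 2J + ν({t'})·(λ𝒲(t') − 𝒬(t')) and 2J − ν({t'})·(λ𝒲(t') − 𝒬(t')) are invertible}. Then Ω is an open subset of ℂ; for each λ ∈ Ω the initial value problem Ju' + qu = λwu + wf, u(x0) = u0 has a unique balanced solution u(·,λ) on (s,t); and the map λ ↦ u(x,λ) is analytic (complex differentiable) on Ω. -/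
/-!
Write `μ` for the restriction of `ν` to `[s, t]`, a finite measure, and turn the matrices into
operators `A₀ = -J⁻¹𝒬`, `B = J⁻¹𝒲` on `E = ℂⁿ`. A balanced function solves the initial value problem
exactly when it solves the integral equation `u x = u₀ + ∫ (A u + g) dμ` with `A = A₀ + lam • B`,
`g = J⁻¹𝒲f`, where the integral runs from `x₀` to `x` and the atoms at the two end points count with
half their mass (`bprim`). The two directions are `balanced_of_eq_bprim` and
`eq_bprim_of_balanced`; the second uses that the left limits of `u` determine its jumps.

Since the atom at `x` enters with half its mass, the equation is Volterra only up to the diagonal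
operator `1 ∓ (μ{x}/2) A x` acting on `u x`. Its invertibility is precisely the condition defining
`Ω`, and since `‖A‖` is integrable only finitely many atoms matter, so the inverses are uniformly
bounded (`exists_diagOp_bound`). After this inversion the open-interval Volterra operator remains;
it is a contraction in a weighted supremum norm (`exists_weight`). The weight is
`K ^ ⌊4 ρ(x₀, x)⌋` with `ρ(x₀, x)` the mass between `x₀` and `x` for the dominating measure `ρ`;
it plays the role of the exponential in the presence of atoms. This gives a Gronwall bound
(`exists_gronwall`) and, by a Neumann series, existence (`exists_solution`). Uniqueness follows from
the Gronwall bound, because a function of locally bounded variation is bounded and measurable on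
compact intervals.

`Ω` is open because at all but finitely many atoms the jump operators stay close to the identity
for nearby parameters, and invertibility is an open condition at each of the others
(`isOpen_nondegenerateJumps`). For the derivative at `lam0`, let `v` solve the equation
differentiated formally in the parameter. Then `u lam - u lam0 - (lam - lam0) • v` solves the
equation with zero initial value and inhomogeneity `(lam - lam0) • B (u lam - u lam0)`, so two
applications of the Gronwall bound show that it is `O(‖lam - lam0‖ ^ 2)`
(`differentiableAt_solution`).
-/

open MeasureTheory Filter Function

/-- A function `u : (a,b) → ℂⁿ` is *balanced* if at every point of `(a,b)` it has
one-sided limits from the left and from the right and its value is their average. -/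
def IsBalancedOn {n : ℕ} (u : ℝ → Fin n → ℂ) (a b : ℝ) : Prop :=
  ∀ x ∈ Set.Ioo a b,
    Tendsto u (nhdsWithin x (Set.Iio x)) (nhds (leftLim u x)) ∧
    Tendsto u (nhdsWithin x (Set.Ioi x)) (nhds (rightLim u x)) ∧
    u x = (leftLim u x + rightLim u x) / 2

/-- A *balanced solution* of `Ju' + qu = λwu + wf` on `(a,b)`, where `q = 𝒬 dν`,
`w = 𝒲 dν`:  a balanced function of locally bounded variation with
`u⁻(d) − u⁻(c) = ∫_{[c,d)} J⁻¹·((λ𝒲(t) − 𝒬(t))·u(t) + 𝒲(t)·f(t)) dν(t)`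
whenever `a < c ≤ d < b`. -/
def IsBalancedSolutionH {n : ℕ} (a b : ℝ) (ν : Measure ℝ)
    (J : Matrix (Fin n) (Fin n) ℂ) (Q W : ℝ → Matrix (Fin n) (Fin n) ℂ) (lam : ℂ)
    (f u : ℝ → Fin n → ℂ) : Prop :=
  LocallyBoundedVariationOn u (Set.Ioo a b) ∧ IsBalancedOn u a b ∧
    ∀ c d : ℝ, a < c → c ≤ d → d < b →
      leftLim u d - leftLim u c =
        ∫ t in Set.Ico c d,
          (J⁻¹).mulVec ((lam • W t - Q t).mulVec (u t) + (W t).mulVec (f t)) ∂ν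

/-! ### A weight for Volterra operators, and large atoms -/

theorem uIoo_subset_of_mem {x0 x y : ℝ} (h : y ∈ Set.uIoo x0 x) :
    Set.uIoo x0 y ⊆ Set.uIoo x0 x := by
  rcases le_total x0 x with h1 | h1
  · rw [Set.uIoo_of_le h1] at h ⊢
    rw [Set.uIoo_of_le h.1.le]
    exact Set.Ioo_subset_Ioo_right h.2.le
  · rw [Set.uIoo_of_ge h1] at h ⊢
    rw [Set.uIoo_of_ge h.2.le]
    exact Set.Ioo_subset_Ioo_left h.1.le

theorem measurableSet_uIoo' (x0 x : ℝ) : MeasurableSet (Set.uIoo x0 x) := measurableSet_Ioo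

theorem measurableSet_uIoo_graph (x0 : ℝ) :
    MeasurableSet {q : ℝ × ℝ | q.2 ∈ Set.uIoo x0 q.1} := by
  have : {q : ℝ × ℝ | q.2 ∈ Set.uIoo x0 q.1} =
      {q : ℝ × ℝ | min x0 q.1 < q.2} ∩ {q : ℝ × ℝ | q.2 < max x0 q.1} := by
    ext q; rfl
  rw [this]
  exact (measurableSet_lt (by fun_prop) (by fun_prop)).inter
    (measurableSet_lt (by fun_prop) (by fun_prop))

/-- A level set of the quantised distribution function `⌊4 ρ(x₀, y)⌋`, cut off at `x`, carries
little mass: by inner regularity it suffices to look at a compact subset, and the point of that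
subset closest to `x₀` bounds its mass by a difference of two values of `ρ(x₀, ·)` lying in the
same quantisation step. -/
theorem measureReal_level_le (ρ : Measure ℝ) [IsFiniteMeasure ρ] (x0 x : ℝ)
    (F : ℝ → ℝ) (hF : F = fun y => ρ.real (Set.uIoo x0 y)) (hFm : Measurable F) :
    ρ.real {y | y ∈ Set.uIoo x0 x ∧ ⌊4 * F y⌋₊ = ⌊4 * F x⌋₊} ≤ 1 / 4 := by
  have hF0 : ∀ y, 0 ≤ F y := fun y => by rw [hF]; positivity
  set L := {y | y ∈ Set.uIoo x0 x ∧ ⌊4 * F y⌋₊ = ⌊4 * F x⌋₊} with hL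
  have hLm : MeasurableSet L := by
    refine (measurableSet_uIoo' x0 x).inter ?_
    exact measurableSet_eq_fun (by fun_prop) measurable_const
  by_contra! hcon
  have h1 : ENNReal.ofReal (1 / 4) < ρ L := by
    rw [ENNReal.ofReal_lt_iff_lt_toReal (by norm_num) (measure_ne_top _ _)]
    exact hcon
  obtain ⟨C, hCL, hC, hlt⟩ := hLm.exists_lt_isCompact_of_ne_top (measure_ne_top _ _) h1
  have hCne : C.Nonempty := by
    rw [Set.nonempty_iff_ne_empty]
    rintro rfl
    simp at hlt
  have hlt' : 1 / 4 < ρ.real C := by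
    rwa [ENNReal.ofReal_lt_iff_lt_toReal (by norm_num) (measure_ne_top _ _)] at hlt
  -- the point of `C` nearest to `x₀`
  have key : ∃ y ∈ C, C ⊆ Set.uIoo x0 x \ Set.uIoo x0 y := by
    rcases le_total x0 x with h | h
    · obtain ⟨y, hy, hmin⟩ := hC.exists_isLeast hCne
      refine ⟨y, hy, fun z hz => ⟨(hCL hz).1, fun hz' => ?_⟩⟩
      have hyI := (hCL hy).1
      rw [Set.uIoo_of_le h] at hyI
      rw [Set.uIoo_of_le hyI.1.le] at hz'
      exact absurd (hmin hz) (not_le.2 hz'.2)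
    · obtain ⟨y, hy, hmax⟩ := hC.exists_isGreatest hCne
      refine ⟨y, hy, fun z hz => ⟨(hCL hz).1, fun hz' => ?_⟩⟩
      have hyI := (hCL hy).1
      rw [Set.uIoo_of_ge h] at hyI
      rw [Set.uIoo_of_ge hyI.2.le] at hz'
      exact absurd (hmax hz) (not_le.2 hz'.1)
  obtain ⟨y, hy, hsub⟩ := key
  have h2 : ρ.real C ≤ F x - F y := by
    refine (measureReal_mono hsub).trans ?_
    rw [measureReal_sdiff (uIoo_subset_of_mem (hCL hy).1) (measurableSet_uIoo' _ _), hF]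
  have h3 := (hCL hy).2
  have h4 := Nat.lt_floor_add_one (4 * F x)
  have h5 := Nat.floor_le (a := 4 * F y) (by have := hF0 y; positivity)
  rw [h3] at h5
  linarith

/-- An exponential-type weight `p` for which the Volterra integration
`φ ↦ ∫_{(x₀, x)} φ dρ` is a contraction in the norm `sup |φ| / p`. -/
theorem exists_weight (ρ : Measure ℝ) [IsFiniteMeasure ρ] (x0 : ℝ) :
    ∃ p : ℝ → ℝ, ∃ P : ℝ, Measurable p ∧ (∀ x, 1 ≤ p x ∧ p x ≤ P) ∧
      ∀ x, ∫ y in Set.uIoo x0 x, p y ∂ρ ≤ p x / 2 := by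
  obtain ⟨F, hF⟩ : ∃ F : ℝ → ℝ, F = fun y => ρ.real (Set.uIoo x0 y) := ⟨_, rfl⟩
  have hFm : Measurable F := by
    rw [hF]
    exact (measurable_measure_prodMk_left (ν := ρ)
      (measurableSet_uIoo_graph x0)).ennreal_toReal
  have hFle : ∀ y, F y ≤ ρ.real Set.univ := fun y => by
    rw [hF]; exact measureReal_mono (Set.subset_univ _)
  set M := ρ.real Set.univ with hM
  have hM0 : 0 ≤ M := by positivity
  set K : ℝ := 4 * M + 1 with hK
  have hK1 : 1 ≤ K := by linarith
  refine ⟨fun y => K ^ ⌊4 * F y⌋₊, K ^ ⌊4 * M⌋₊, ?_, fun x => ⟨one_le_pow₀ hK1, ?_⟩, fun x => ?_⟩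
  · exact (measurable_of_countable fun n : ℕ => K ^ n).comp (by fun_prop)
  · exact pow_le_pow_right₀ hK1 (Nat.floor_mono (by linarith [hFle x]))
  set L := {y | y ∈ Set.uIoo x0 x ∧ ⌊4 * F y⌋₊ = ⌊4 * F x⌋₊} with hL
  have hLm : MeasurableSet L := by
    refine (measurableSet_uIoo' x0 x).inter ?_
    exact measurableSet_eq_fun (by fun_prop) measurable_const
  have hLle : ρ.real L ≤ 1 / 4 := measureReal_level_le ρ x0 x F hF hFm
  set c : ℝ := K ^ ⌊4 * F x⌋₊ with hc
  have hc0 : 0 < c := by positivity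
  have hbound : ∀ y ∈ Set.uIoo x0 x, K ^ ⌊4 * F y⌋₊ ≤ L.indicator (fun _ => c) y + c / K := by
    intro y hy
    have hle : ⌊4 * F y⌋₊ ≤ ⌊4 * F x⌋₊ := by
      apply Nat.floor_mono
      have : F y ≤ F x := by rw [hF]; exact measureReal_mono (uIoo_subset_of_mem hy)
      linarith
    rcases hle.eq_or_lt with h | h
    · rw [Set.indicator_of_mem (show y ∈ L from ⟨hy, h⟩), h]
      have : 0 < c / K := by positivity
      linarith
    · have h0 : 0 ≤ L.indicator (fun _ => c) y := Set.indicator_nonneg (fun _ _ => hc0.le) y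
      have : K ^ ⌊4 * F y⌋₊ ≤ c / K := by
        rw [le_div_iff₀ (by linarith), ← pow_succ]
        exact pow_le_pow_right₀ hK1 h
      linarith
  calc ∫ y in Set.uIoo x0 x, K ^ ⌊4 * F y⌋₊ ∂ρ
      ≤ ∫ y in Set.uIoo x0 x, (L.indicator (fun _ => c) y + c / K) ∂ρ := by
        refine integral_mono_of_nonneg (Eventually.of_forall fun y => by positivity) ?_ ?_
        · exact ((integrable_const c).indicator hLm).add (integrable_const _)
        · exact (ae_restrict_iff' (measurableSet_uIoo' _ _)).2 (Eventually.of_forall hbound)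
    _ = ρ.real L * c + F x * (c / K) := by
        rw [integral_add ((integrable_const c).indicator hLm) (integrable_const _),
          integral_indicator hLm, Measure.restrict_restrict hLm]
        have : L ∩ Set.uIoo x0 x = L := Set.inter_eq_left.2 fun y hy => hy.1
        rw [this, hF]
        simp
    _ ≤ 1 / 4 * c + M * (c / K) := by
        gcongr
        exact hFle x
    _ ≤ c / 2 := by
        have : M * (c / K) ≤ c / 4 := by
          rw [mul_div_assoc', div_le_div_iff₀ (by linarith) (by norm_num)]
          nlinarith
        linarith

/-- The weight of `exists_weight` for a measure with an integrable density `κ` with respect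
to `μ`. -/
theorem exists_weight_density (μ : Measure ℝ) {κ : ℝ → ℝ} (hκ : Integrable κ μ)
    (hκ0 : ∀ x, 0 ≤ κ x) (x0 : ℝ) :
    ∃ p : ℝ → ℝ, ∃ P : ℝ, Measurable p ∧ (∀ x, 1 ≤ p x ∧ p x ≤ P) ∧
      ∀ x, ∫ y in Set.uIoo x0 x, κ y * p y ∂μ ≤ p x / 2 := by
  set k : ℝ → NNReal := fun x => (κ x).toNNReal with hk
  have hkm : AEMeasurable k μ := hκ.aestronglyMeasurable.aemeasurable.real_toNNReal
  have : IsFiniteMeasure (μ.withDensity fun x => (k x : ENNReal)) := by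
    refine isFiniteMeasure_withDensity ?_
    have := hκ.lintegral_lt_top
    exact this.ne
  obtain ⟨p, P, hp, hb, hint⟩ := exists_weight (μ.withDensity fun x => (k x : ENNReal)) x0
  refine ⟨p, P, hp, hb, fun x => ?_⟩
  have h := hint x
  rw [setIntegral_withDensity_eq_setIntegral_smul₀ hkm.restrict _ (measurableSet_uIoo' _ _)] at h
  convert h using 3 with y
  simp [hk, NNReal.smul_def, hκ0]

/-- Only finitely many atoms carry a weighted mass at least one. -/
theorem finite_large_atoms (μ : Measure ℝ) {κ : ℝ → ℝ} (hκ : Integrable κ μ)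
    (hκ0 : ∀ x, 0 ≤ κ x) : {x | 1 ≤ μ.real {x} * κ x}.Finite := by
  by_contra hinf
  obtain ⟨N, hN⟩ := exists_nat_gt (∫ x, κ x ∂μ)
  obtain ⟨S, hS, hcard⟩ := Set.Infinite.exists_subset_card_eq hinf N
  have h1 : ∑ x ∈ S, μ.real {x} * κ x ≤ ∫ x, κ x ∂μ := by
    have := setIntegral_finset S (hκ.integrableOn (s := (S : Set ℝ)))
    simp only [smul_eq_mul] at this
    rw [← this]
    exact setIntegral_le_integral hκ (Eventually.of_forall hκ0)
  have h2 : (N : ℝ) ≤ ∑ x ∈ S, μ.real {x} * κ x := by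
    rw [← hcard]
    simpa using Finset.card_nsmul_le_sum S (fun x => μ.real {x} * κ x) 1 fun x hx => hS hx
  linarith

theorem countable_atoms (μ : Measure ℝ) [IsFiniteMeasure μ] :
    {x | μ.real {x} ≠ 0}.Countable := by
  have : {x | μ.real {x} ≠ 0} ⊆ ⋃ k : ℕ, {x | 1 ≤ μ.real {x} * (k : ℝ)} := by
    intro x hx
    have hpos : 0 < μ.real {x} := lt_of_le_of_ne (by positivity) (Ne.symm hx)
    obtain ⟨k, hk⟩ := exists_nat_gt (1 / μ.real {x})
    refine Set.mem_iUnion.2 ⟨k, ?_⟩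
    rw [div_lt_iff₀ hpos] at hk
    show 1 ≤ μ.real {x} * (k : ℝ)
    linarith [mul_comm (k : ℝ) (μ.real {x})]
  refine (Set.countable_iUnion fun k => Set.Finite.countable ?_).mono this
  exact finite_large_atoms μ (κ := fun _ => (k : ℝ)) (integrable_const _) fun _ => by positivity

/-! ### The integral equation: Gronwall bound and existence -/

section Volterra

variable {E : Type*} [NormedAddCommGroup E] [NormedSpace ℂ E]

/-- The sign of `x - x₀`, recording on which side of the initial point `x` lies. -/
noncomputable def side (x0 x : ℝ) : ℝ := if x0 < x then 1 else if x < x0 then -1 else 0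

theorem side_self (x0 : ℝ) : side x0 x0 = 0 := by simp [side]

theorem side_of_lt {x0 x : ℝ} (h : x0 < x) : side x0 x = 1 := by simp [side, h]

theorem side_of_gt {x0 x : ℝ} (h : x < x0) : side x0 x = -1 := by simp [side, h, h.le]

theorem side_cases (x0 x : ℝ) : side x0 x = 1 ∨ side x0 x = -1 ∨ side x0 x = 0 := by
  unfold side; split_ifs <;> simp

theorem abs_side_le (x0 x : ℝ) : |side x0 x| ≤ 1 := by
  rcases side_cases x0 x with h | h | h <;> simp [h]

theorem norm_side_smul_le (x0 x : ℝ) (e : E) : ‖side x0 x • e‖ ≤ ‖e‖ := by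
  rw [norm_smul]
  exact mul_le_of_le_one_left (norm_nonneg _) (abs_side_le x0 x)

theorem measurable_side (x0 : ℝ) : Measurable (side x0) := by
  unfold side
  exact Measurable.ite measurableSet_Ioi measurable_const
    (Measurable.ite measurableSet_Iio measurable_const measurable_const)

/-- The balanced primitive of `m dμ` that vanishes at `x₀`: the atoms at the two end points of
the interval between `x₀` and `x` count with half their mass. -/
noncomputable def bprim (μ : Measure ℝ) (x0 : ℝ) (m : ℝ → E) (x : ℝ) : E :=
  side x0 x • ((μ.real {x0} / 2) • m x0 + (∫ y in Set.uIoo x0 x, m y ∂μ) +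
    (μ.real {x} / 2) • m x)

theorem bprim_self (μ : Measure ℝ) (x0 : ℝ) (m : ℝ → E) : bprim μ x0 m x0 = 0 := by
  simp [bprim, side_self]

/-- The coefficient of `u x` in the equation `u x = u₀ + bprim μ x₀ (A u + g) x`, once the
contribution of the atom at `x` has been moved to the left. -/
noncomputable def diagOp (μ : Measure ℝ) (A : ℝ → E →L[ℂ] E) (x0 x : ℝ) : E →L[ℂ] E :=
  1 - (side x0 x * (μ.real {x} / 2)) • A x

/-- The jump condition: at no atom is the passage from the balanced value to either one-sided
limit degenerate. -/
def NondegenerateJumps (μ : Measure ℝ) (A : ℝ → E →L[ℂ] E) : Prop :=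
  ∀ x, IsUnit (1 + (μ.real {x} / 2) • A x) ∧ IsUnit (1 - (μ.real {x} / 2) • A x)

theorem diagOp_apply (μ : Measure ℝ) (A : ℝ → E →L[ℂ] E) (x0 x : ℝ) (w : E) :
    diagOp μ A x0 x w = w - side x0 x • (μ.real {x} / 2) • A x w := by
  simp [diagOp, mul_smul]

theorem isUnit_diagOp {μ : Measure ℝ} {A : ℝ → E →L[ℂ] E} (hD : NondegenerateJumps μ A)
    (x0 x : ℝ) : IsUnit (diagOp μ A x0 x) := by
  unfold diagOp
  rcases side_cases x0 x with h | h | h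
  · simpa [h] using (hD x).2
  · simpa [h] using (hD x).1
  · simp [h]

theorem atom_norm_le {F : Type*} [NormedAddCommGroup F] (μ : Measure ℝ) {m : ℝ → F}
    (hm : Integrable m μ) (x : ℝ) : μ.real {x} * ‖m x‖ ≤ ∫ y, ‖m y‖ ∂μ := by
  have h : ∫ y in ({x} : Set ℝ), ‖m y‖ ∂μ = μ.real {x} * ‖m x‖ := by
    rw [integral_singleton]; rfl
  rw [← h]
  exact setIntegral_le_integral hm.norm (Eventually.of_forall fun y => norm_nonneg _)

theorem half_atom_norm_le (μ : Measure ℝ) {m : ℝ → E}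
    (hm : Integrable m μ) (x : ℝ) : ‖(μ.real {x} / 2) • m x‖ ≤ ∫ y, ‖m y‖ ∂μ := by
  have h := atom_norm_le μ hm x
  have h0 : 0 ≤ ∫ y, ‖m y‖ ∂μ := integral_nonneg fun y => norm_nonneg _
  rw [norm_smul, Real.norm_of_nonneg (by positivity)]
  linarith

/-- The diagonal operators are bounded below uniformly in `x`: outside a finite set of atoms
they are perturbations of the identity by operators of norm at most one half. -/
theorem exists_diagOp_bound {μ : Measure ℝ} {A : ℝ → E →L[ℂ] E} (hA : Integrable A μ)
    (hD : NondegenerateJumps μ A) (x0 : ℝ) :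
    ∃ K : ℝ, 0 ≤ K ∧ ∀ x w, ‖w‖ ≤ K * ‖diagOp μ A x0 x w‖ := by
  have hfin := finite_large_atoms μ hA.norm fun x => norm_nonneg (A x)
  refine ⟨2 + ∑ x ∈ hfin.toFinset, ‖Ring.inverse (diagOp μ A x0 x)‖, by positivity, ?_⟩
  intro x w
  by_cases hx : x ∈ {x | 1 ≤ μ.real {x} * ‖A x‖}
  · have h1 : ‖Ring.inverse (diagOp μ A x0 x)‖ ≤
        ∑ x ∈ hfin.toFinset, ‖Ring.inverse (diagOp μ A x0 x)‖ :=
      Finset.single_le_sum (f := fun x => ‖Ring.inverse (diagOp μ A x0 x)‖)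
        (fun _ _ => norm_nonneg _) (hfin.mem_toFinset.2 hx)
    have h2 : w = Ring.inverse (diagOp μ A x0 x) (diagOp μ A x0 x w) := by
      rw [← mul_apply_eq_comp, Ring.inverse_mul_cancel _ (isUnit_diagOp hD x0 x)]
      rfl
    calc ‖w‖ = ‖Ring.inverse (diagOp μ A x0 x) (diagOp μ A x0 x w)‖ := by rw [← h2]
      _ ≤ ‖Ring.inverse (diagOp μ A x0 x)‖ * ‖diagOp μ A x0 x w‖ :=
        ContinuousLinearMap.le_opNorm _ _
      _ ≤ _ := by gcongr; linarith
  · have h3 : μ.real {x} * ‖A x‖ < 1 := not_le.1 hx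
    have h4 : ‖side x0 x • (μ.real {x} / 2) • A x w‖ ≤ ‖w‖ / 2 := by
      refine (norm_side_smul_le _ _ _).trans ?_
      rw [norm_smul, Real.norm_of_nonneg (by positivity)]
      have := (A x).le_opNorm w
      have hμ : 0 ≤ μ.real {x} := by positivity
      nlinarith [mul_le_mul_of_nonneg_left this hμ, norm_nonneg w]
    have h5 : ‖w‖ ≤ 2 * ‖diagOp μ A x0 x w‖ := by
      rw [diagOp_apply]
      have := norm_sub_norm_le w (side x0 x • (μ.real {x} / 2) • A x w)
      linarith
    refine h5.trans ?_
    gcongr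
    have : 0 ≤ ∑ x ∈ hfin.toFinset, ‖Ring.inverse (diagOp μ A x0 x)‖ := by positivity
    linarith

/-- The equation `u x = u₀ + bprim μ x₀ (A u + h) x` solved for the diagonal part. -/
theorem diagOp_apply_of_eq {μ : Measure ℝ} {A : ℝ → E →L[ℂ] E} {x0 : ℝ} {u h : ℝ → E} {u0 : E}
    {x : ℝ} (heq : u x = u0 + bprim μ x0 (fun y => A y (u y) + h y) x) :
    diagOp μ A x0 x (u x) = u0 + side x0 x • ((μ.real {x0} / 2) • (A x0 (u x0) + h x0) +
      (∫ y in Set.uIoo x0 x, (A y (u y) + h y) ∂μ) + (μ.real {x} / 2) • h x) := by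
  rw [diagOp_apply]
  nth_rewrite 1 [heq]
  simp only [bprim, smul_add]
  abel

/-- Gronwall's inequality: solutions of `u = u₀ + bprim μ x₀ (A u + h)` on an interval are
bounded by the data, with a constant depending on neither the interval nor the data. -/
theorem exists_gronwall {μ : Measure ℝ} {A : ℝ → E →L[ℂ] E} (hA : Integrable A μ)
    (hD : NondegenerateJumps μ A) (x0 : ℝ) :
    ∃ C : ℝ, 0 ≤ C ∧ ∀ (S : Set ℝ) (u h : ℝ → E) (u0 : E) (R : ℝ), x0 ∈ S → S.OrdConnected →
      Integrable h μ → (∀ x ∈ S, ‖u x‖ ≤ R) →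
      (∀ x ∈ S, u x = u0 + bprim μ x0 (fun y => A y (u y) + h y) x) →
      ∀ x ∈ S, ‖u x‖ ≤ C * (‖u0‖ + ∫ y, ‖h y‖ ∂μ) := by
  obtain ⟨K, hK0, hK⟩ := exists_diagOp_bound hA hD x0
  obtain ⟨p, P, hpm, hp, hint⟩ := exists_weight_density μ (hA.norm.const_mul K)
    (fun x => mul_nonneg hK0 (norm_nonneg (A x))) x0
  set N := ∫ y, ‖A y‖ ∂μ with hN
  have hN0 : 0 ≤ N := integral_nonneg fun y => norm_nonneg _
  have hP1 : 1 ≤ P := (hp x0).1.trans (hp x0).2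
  refine ⟨2 * (K * (3 + N)) * P, by positivity, ?_⟩
  intro S u h u0 R hx0 hS hh hR heq
  set H := ∫ y, ‖h y‖ ∂μ with hH
  have hH0 : 0 ≤ H := integral_nonneg fun y => norm_nonneg _
  set B := K * (3 + N) * (‖u0‖ + H) with hB
  have hB0 : 0 ≤ B := by positivity
  have hux0 : u x0 = u0 := by rw [heq x0 hx0, bprim_self, add_zero]
  have hR0 : 0 ≤ R := (norm_nonneg _).trans (hR x0 hx0)
  have hApint : Integrable (fun y => ‖A y‖ * p y) μ := by
    refine (hA.norm.mul_const P).mono'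
      (hA.aestronglyMeasurable.norm.mul hpm.aestronglyMeasurable)
      (Eventually.of_forall fun y => ?_)
    have h1 := (hp y).1
    rw [Real.norm_of_nonneg (by positivity)]
    exact mul_le_mul_of_nonneg_left (hp y).2 (norm_nonneg _)
  have step : ∀ r : ℝ, 0 ≤ r → (∀ x ∈ S, ‖u x‖ ≤ r * p x) →
      ∀ x ∈ S, ‖u x‖ ≤ (B + r / 2) * p x := by
    intro r hr hru x hx
    have hsub : Set.uIoo x0 x ⊆ S := by
      intro y hy
      exact hS.uIcc_subset hx0 hx ⟨hy.1.le, hy.2.le⟩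
    have h1 : ‖∫ y in Set.uIoo x0 x, (A y (u y) + h y) ∂μ‖ ≤
        r * (∫ y in Set.uIoo x0 x, ‖A y‖ * p y ∂μ) + H := by
      calc _ ≤ ∫ y in Set.uIoo x0 x, (r * (‖A y‖ * p y) + ‖h y‖) ∂μ := by
            refine norm_integral_le_of_norm_le
              ((hApint.const_mul r).add hh.norm).integrableOn ?_
            refine (ae_restrict_iff' (measurableSet_uIoo' _ _)).2
              (Eventually.of_forall fun y hy => ?_)
            refine (norm_add_le _ _).trans (add_le_add ?_ le_rfl)
            refine ((A y).le_opNorm _).trans ?_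
            have := mul_le_mul_of_nonneg_left (hru y (hsub hy)) (norm_nonneg (A y))
            linarith
        _ = r * (∫ y in Set.uIoo x0 x, ‖A y‖ * p y ∂μ) + ∫ y in Set.uIoo x0 x, ‖h y‖ ∂μ := by
            rw [integral_add (hApint.const_mul r).integrableOn hh.norm.integrableOn,
              integral_const_mul]
        _ ≤ _ := by
            gcongr
            exact setIntegral_le_integral hh.norm (Eventually.of_forall fun y => norm_nonneg _)
    have h2 : K * (∫ y in Set.uIoo x0 x, ‖A y‖ * p y ∂μ) ≤ p x / 2 := by
      rw [← integral_const_mul]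
      simpa only [mul_assoc] using hint x
    have h3 : ‖(μ.real {x0} / 2) • (A x0 (u x0) + h x0)‖ ≤ N * ‖u0‖ + H := by
      rw [smul_add, hux0]
      refine (norm_add_le _ _).trans (add_le_add ?_ (half_atom_norm_le μ hh x0))
      have h4 := atom_norm_le μ hA x0
      rw [norm_smul, Real.norm_of_nonneg (by positivity)]
      have h5 := (A x0).le_opNorm u0
      have hμ : 0 ≤ μ.real {x0} := by positivity
      have h6 := mul_le_mul_of_nonneg_left h5 hμ
      have h7 := mul_le_mul_of_nonneg_right h4 (norm_nonneg u0)
      have h8 : 0 ≤ μ.real {x0} * ‖A x0 u0‖ := by positivity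
      linarith
    have h9 := half_atom_norm_le μ hh x
    have h10 : ‖diagOp μ A x0 x (u x)‖ ≤ ‖u0‖ + (N * ‖u0‖ + H +
        (r * (∫ y in Set.uIoo x0 x, ‖A y‖ * p y ∂μ) + H) + H) := by
      rw [diagOp_apply_of_eq (heq x hx)]
      refine (norm_add_le _ _).trans (add_le_add le_rfl ?_)
      refine (norm_side_smul_le _ _ _).trans ?_
      exact norm_add_le_of_le (norm_add_le_of_le h3 h1) h9
    have hpx := (hp x).1
    calc ‖u x‖ ≤ K * ‖diagOp μ A x0 x (u x)‖ := hK x _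
      _ ≤ K * (‖u0‖ + (N * ‖u0‖ + H +
        (r * (∫ y in Set.uIoo x0 x, ‖A y‖ * p y ∂μ) + H) + H)) := by gcongr
      _ = K * ((1 + N) * ‖u0‖ + 3 * H) +
          r * (K * (∫ y in Set.uIoo x0 x, ‖A y‖ * p y ∂μ)) := by ring
      _ ≤ B + r * (p x / 2) := by
          gcongr
          rw [hB, mul_assoc]
          gcongr
          nlinarith [norm_nonneg u0, mul_nonneg hN0 hH0]
      _ ≤ (B + r / 2) * p x := by nlinarith
  have hk : ∀ k : ℕ, ∀ x ∈ S, ‖u x‖ ≤ (2 * B + R / 2 ^ k) * p x := by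
    intro k
    induction k with
    | zero =>
      intro x hx
      have := hR x hx
      have hpx := (hp x).1
      rw [pow_zero, div_one]
      nlinarith
    | succ k ih =>
      intro x hx
      have := step _ (by positivity) ih x hx
      convert this using 2
      rw [pow_succ]
      field_simp
      ring
  intro x hx
  have hlim : Tendsto (fun k : ℕ => (2 * B + R / 2 ^ k) * p x) atTop (nhds ((2 * B + 0) * p x)) := by
    refine Tendsto.mul_const _ (Tendsto.const_add _ ?_)
    exact tendsto_const_nhds.div_atTop (tendsto_pow_atTop_atTop_of_one_lt (by norm_num))
  have h1 := ge_of_tendsto' hlim fun k => hk k x hx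
  calc ‖u x‖ ≤ 2 * B * p x := by simpa using h1
    _ ≤ 2 * B * P := by gcongr; exact (hp x).2
    _ = _ := by rw [hB]; ring

theorem integrable_clm_apply {μ : Measure ℝ} {A : ℝ → E →L[ℂ] E} (hA : Integrable A μ)
    {u : ℝ → E} (hu : AEStronglyMeasurable u μ) {R : ℝ} (hR : ∀ᵐ x ∂μ, ‖u x‖ ≤ R) :
    Integrable (fun x => A x (u x)) μ := by
  refine (hA.norm.mul_const R).mono'
    (isBoundedBilinearMap_apply.continuous.comp_aestronglyMeasurable
      (hA.aestronglyMeasurable.prodMk hu)) ?_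
  filter_upwards [hR] with x hx
  exact ((A x).le_opNorm _).trans (mul_le_mul_of_nonneg_left hx (norm_nonneg _))

theorem stronglyMeasurable_volterra (μ : Measure ℝ) [SFinite μ] (x0 : ℝ) {m : ℝ → E}
    (hm : AEStronglyMeasurable m μ) :
    StronglyMeasurable fun x => ∫ y in Set.uIoo x0 x, m y ∂μ := by
  have h1 : (fun x => ∫ y in Set.uIoo x0 x, m y ∂μ) =
      fun x => ∫ y, {q : ℝ × ℝ | q.2 ∈ Set.uIoo x0 q.1}.indicator
        (fun q => hm.mk m q.2) (x, y) ∂μ := by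
    funext x
    rw [← integral_indicator (measurableSet_uIoo' _ _)]
    refine integral_congr_ae ?_
    filter_upwards [hm.ae_eq_mk] with y hy
    by_cases h : y ∈ Set.uIoo x0 x
    · rw [Set.indicator_of_mem h,
        Set.indicator_of_mem (show (x, y) ∈ {q : ℝ × ℝ | q.2 ∈ Set.uIoo x0 q.1} from h), hy]
    · rw [Set.indicator_of_notMem h,
        Set.indicator_of_notMem (show (x, y) ∉ {q : ℝ × ℝ | q.2 ∈ Set.uIoo x0 q.1} from h)]
  rw [h1]
  refine StronglyMeasurable.integral_prod_right' (f := fun q : ℝ × ℝ =>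
    {q : ℝ × ℝ | q.2 ∈ Set.uIoo x0 q.1}.indicator (fun q => hm.mk m q.2) q) ?_
  exact (hm.stronglyMeasurable_mk.comp_measurable measurable_snd).indicator
    (measurableSet_uIoo_graph x0)

/-- The Neumann series solves `u = u₀ + bprim μ x₀ (A u + g)`; it converges because the Volterra
operator is a contraction in the weighted supremum norm. -/
theorem exists_solution [CompleteSpace E] [MeasurableSpace E] [BorelSpace E]
    [SecondCountableTopology E] {μ : Measure ℝ} [IsFiniteMeasure μ] {A : ℝ → E →L[ℂ] E}
    (hA : Integrable A μ) (hD : NondegenerateJumps μ A) (x0 : ℝ) {g : ℝ → E}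
    (hg : Integrable g μ) (u0 : E) :
    ∃ u : ℝ → E, ∃ R : ℝ, Measurable u ∧ (∀ x, ‖u x‖ ≤ R) ∧
      ∀ x, u x = u0 + bprim μ x0 (fun y => A y (u y) + g y) x := by
  obtain ⟨K, hK0, hK⟩ := exists_diagOp_bound hA hD x0
  obtain ⟨p, P, hpm, hp, hint⟩ := exists_weight_density μ (hA.norm.const_mul K)
    (fun x => mul_nonneg hK0 (norm_nonneg (A x))) x0
  have hp0 : ∀ x, 0 ≤ p x := fun x => zero_le_one.trans (hp x).1
  have hP0 : 0 ≤ P := (hp0 x0).trans (hp x0).2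
  -- `Ring.inverse` is the genuine inverse, since every diagonal operator is a unit
  set V : ℝ → E →L[ℂ] E := fun x => Ring.inverse (diagOp μ A x0 x) with hV
  have hDV : ∀ x w, diagOp μ A x0 x (V x w) = w := by
    intro x w
    rw [hV, ← mul_apply_eq_comp, Ring.mul_inverse_cancel _ (isUnit_diagOp hD x0 x)]
    rfl
  have hVK : ∀ x w, ‖V x w‖ ≤ K * ‖w‖ := by
    intro x w
    simpa only [hDV] using hK x (V x w)
  -- off the countable set of atoms the diagonal operators are the identity
  have hVmeas : ∀ f : ℝ → E, Measurable f → Measurable fun x => V x (f x) := by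
    intro f hf
    refine hf.measurable_of_countable_ne ((countable_atoms μ).mono fun x hx => ?_)
    contrapose! hx
    have h0 : μ.real {x} = 0 := by simpa using hx
    simp [hV, diagOp, h0]
  set b1 : ℝ → E := fun x => u0 + side x0 x • ((μ.real {x0} / 2) • (A x0 u0 + g x0) +
    (∫ y in Set.uIoo x0 x, g y ∂μ)) with hb1
  set b : ℝ → E := fun x => u0 + side x0 x • ((μ.real {x0} / 2) • (A x0 u0 + g x0) +
    (∫ y in Set.uIoo x0 x, g y ∂μ) + (μ.real {x} / 2) • g x) with hb
  have hb1m : Measurable b1 := by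
    have h1 := (stronglyMeasurable_volterra μ x0 hg.aestronglyMeasurable).measurable
    exact measurable_const.add ((measurable_side x0).smul (measurable_const.add h1))
  have hbm : Measurable b := by
    refine hb1m.measurable_of_countable_ne ((countable_atoms μ).mono fun x hx => ?_)
    contrapose! hx
    have h0 : μ.real {x} = 0 := by simpa using hx
    simp [hb, hb1, h0]
  set G := ∫ y, ‖g y‖ ∂μ with hG
  set B0 := ‖u0‖ + (‖(μ.real {x0} / 2) • (A x0 u0 + g x0)‖ + G + G) with hB0
  have hbB : ∀ x, ‖b x‖ ≤ B0 := by
    intro x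
    refine (norm_add_le _ _).trans (add_le_add le_rfl ?_)
    refine (norm_side_smul_le _ _ _).trans ?_
    refine norm_add_le_of_le (norm_add_le_of_le le_rfl ?_) (half_atom_norm_le μ hg x)
    exact (norm_integral_le_integral_norm _).trans
      (setIntegral_le_integral hg.norm (Eventually.of_forall fun y => norm_nonneg _))
  have hB00 : 0 ≤ B0 := (norm_nonneg _).trans (hbB x0)
  obtain ⟨w, hw0, hwsucc⟩ : ∃ w : ℕ → ℝ → E, (∀ x, w 0 x = V x (b x)) ∧
      ∀ k x, w (k + 1) x = V x (side x0 x • ∫ y in Set.uIoo x0 x, A y (w k y) ∂μ) :=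
    ⟨fun k => (fun (w : ℝ → E) x => V x (side x0 x • ∫ y in Set.uIoo x0 x, A y (w y) ∂μ))^[k]
      fun x => V x (b x), fun x => rfl, fun k x => by
        simp only [Function.iterate_succ_apply']⟩
  have hApint : Integrable (fun y => ‖A y‖ * p y) μ := by
    refine (hA.norm.mul_const P).mono'
      (hA.aestronglyMeasurable.norm.mul hpm.aestronglyMeasurable)
      (Eventually.of_forall fun y => ?_)
    have h1 := hp0 y
    rw [Real.norm_of_nonneg (by positivity)]
    exact mul_le_mul_of_nonneg_left (hp y).2 (norm_nonneg _)
  set B := K * B0 with hB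
  have hBn : 0 ≤ B := by positivity
  have hwb : ∀ k x, ‖w k x‖ ≤ B / 2 ^ k * p x := by
    intro k
    induction k with
    | zero =>
      intro x
      rw [pow_zero, div_one]
      have h1 : ‖w 0 x‖ ≤ B := by
        rw [hw0]
        exact (hVK x _).trans (mul_le_mul_of_nonneg_left (hbB x) hK0)
      exact h1.trans (le_mul_of_one_le_right hBn (hp x).1)
    | succ k ih =>
      intro x
      rw [hwsucc]
      refine (hVK x _).trans ?_
      have h1 : ‖∫ y in Set.uIoo x0 x, A y (w k y) ∂μ‖ ≤
          ∫ y in Set.uIoo x0 x, B / 2 ^ k * (‖A y‖ * p y) ∂μ := by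
        refine norm_integral_le_of_norm_le (hApint.const_mul _).integrableOn
          (Eventually.of_forall fun y => ?_)
        refine ((A y).le_opNorm _).trans ?_
        have := mul_le_mul_of_nonneg_left (ih y) (norm_nonneg (A y))
        linarith
      have h2 : K * (∫ y in Set.uIoo x0 x, ‖A y‖ * p y ∂μ) ≤ p x / 2 := by
        rw [← integral_const_mul]
        simpa only [mul_assoc] using hint x
      rw [integral_const_mul] at h1
      calc K * ‖side x0 x • ∫ y in Set.uIoo x0 x, A y (w k y) ∂μ‖
          ≤ K * (B / 2 ^ k * ∫ y in Set.uIoo x0 x, ‖A y‖ * p y ∂μ) := by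
            gcongr
            exact (norm_side_smul_le _ _ _).trans h1
        _ = B / 2 ^ k * (K * ∫ y in Set.uIoo x0 x, ‖A y‖ * p y ∂μ) := by ring
        _ ≤ B / 2 ^ k * (p x / 2) := by gcongr
        _ = B / 2 ^ (k + 1) * p x := by rw [pow_succ]; field_simp
  have hwbP : ∀ k x, ‖w k x‖ ≤ B / 2 ^ k * P := fun k x =>
    (hwb k x).trans (mul_le_mul_of_nonneg_left (hp x).2 (by positivity))
  have hwm : ∀ k, Measurable (w k) := by
    intro k
    induction k with
    | zero => exact (funext hw0 : w 0 = _) ▸ hVmeas b hbm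
    | succ k ih =>
      have h1 := integrable_clm_apply hA ih.aestronglyMeasurable
        (Eventually.of_forall (hwbP k))
      have h2 := hVmeas _ ((measurable_side x0).smul
        (stronglyMeasurable_volterra μ x0 h1.aestronglyMeasurable).measurable)
      convert h2 using 1
      funext x
      exact hwsucc k x
  have hgeo : HasSum (fun k : ℕ => B / 2 ^ k * P) (2 * B * P) := by
    have h1 := (hasSum_geometric_two.mul_left B).mul_right P
    have h2 : (fun k : ℕ => B / 2 ^ k * P) = fun k : ℕ => B * (1 / 2) ^ k * P := by
      funext k; simp [div_eq_mul_inv]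
    rw [h2, mul_comm 2 B]
    exact h1
  have hsum : ∀ x, Summable fun k => w k x := fun x =>
    Summable.of_norm_bounded hgeo.summable fun k => hwbP k x
  set u : ℝ → E := fun x => ∑' k, w k x with hu
  have hus : ∀ x, HasSum (fun k => w k x) (u x) := fun x => (hsum x).hasSum
  have huR : ∀ x, ‖u x‖ ≤ 2 * B * P := fun x =>
    tsum_of_norm_bounded hgeo fun k => hwbP k x
  have hum : Measurable u := by
    refine measurable_of_tendsto_metrizable
      (f := fun (n : ℕ) (x : ℝ) => ∑ k ∈ Finset.range n, w k x) (fun n => ?_) ?_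
    · exact Finset.measurable_sum _ fun k _ => hwm k
    · exact tendsto_pi_nhds.2 fun x => (hus x).tendsto_sum_nat
  have hAu := integrable_clm_apply hA hum.aestronglyMeasurable (Eventually.of_forall huR)
  have hintsum : ∀ x, HasSum (fun k => ∫ y in Set.uIoo x0 x, A y (w k y) ∂μ)
      (∫ y in Set.uIoo x0 x, A y (u y) ∂μ) := by
    intro x
    refine hasSum_integral_of_dominated_convergence (fun k y => ‖A y‖ * (B / 2 ^ k * P))
      (fun k => ?_) (fun k => Eventually.of_forall fun y => ?_)
      (Eventually.of_forall fun y => hgeo.summable.mul_left _) ?_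
      (Eventually.of_forall fun y => (A y).hasSum (hus y))
    · exact (integrable_clm_apply hA (hwm k).aestronglyMeasurable
        (Eventually.of_forall (hwbP k))).aestronglyMeasurable.restrict
    · exact ((A y).le_opNorm _).trans (mul_le_mul_of_nonneg_left (hwbP k y) (norm_nonneg _))
    · simp only [tsum_mul_left, hgeo.tsum_eq]
      exact (hA.norm.mul_const _).integrableOn
  have hDu : ∀ x, diagOp μ A x0 x (u x) =
      b x + side x0 x • ∫ y in Set.uIoo x0 x, A y (u y) ∂μ := by
    intro x
    have h1 := (diagOp μ A x0 x).hasSum (hus x)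
    have h2 : HasSum (fun k => diagOp μ A x0 x (w (k + 1) x))
        (side x0 x • ∫ y in Set.uIoo x0 x, A y (u y) ∂μ) := by
      simp only [hwsucc, hDV]
      exact (hintsum x).const_smul _
    have h3 := HasSum.zero_add (f := fun k => diagOp μ A x0 x (w k x)) h2
    have h4 : diagOp μ A x0 x (w 0 x) = b x := by rw [hw0, hDV]
    rw [h4] at h3
    exact h1.unique h3
  have hux0 : u x0 = u0 := by
    have := hDu x0
    simpa [diagOp, side_self, hb] using this
  refine ⟨u, 2 * B * P, hum, huR, fun x => ?_⟩
  have h1 := hDu x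
  rw [diagOp_apply, sub_eq_iff_eq_add] at h1
  rw [h1]
  simp only [bprim, hb]
  rw [integral_add hAu.integrableOn hg.integrableOn, hux0]
  simp only [smul_add]
  abel

end Volterra

/-! ### Balanced primitives and balanced functions -/

section Primitive

variable {F : Type*} [NormedAddCommGroup F] [NormedSpace ℝ F]

theorem tendsto_setIntegral_of_eventually {μ : Measure ℝ} {m : ℝ → F} (hm : Integrable m μ)
    {S : ℝ → Set ℝ} {S0 : Set ℝ} (hS : ∀ z, MeasurableSet (S z)) (hS0 : MeasurableSet S0)
    {l : Filter ℝ} [l.IsCountablyGenerated] (h : ∀ y, ∀ᶠ z in l, (y ∈ S z ↔ y ∈ S0)) :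
    Tendsto (fun z => ∫ y in S z, m y ∂μ) l (nhds (∫ y in S0, m y ∂μ)) := by
  simp_rw [← integral_indicator (hS _)]
  rw [← integral_indicator hS0]
  refine tendsto_integral_filter_of_dominated_convergence (fun y => ‖m y‖)
    (Eventually.of_forall fun z => hm.aestronglyMeasurable.indicator (hS z))
    (Eventually.of_forall fun z => Eventually.of_forall fun y => norm_indicator_le_norm_self _ _)
    hm.norm (Eventually.of_forall fun y => ?_)
  refine tendsto_const_nhds.congr' ?_
  filter_upwards [h y] with z hz
  by_cases hy : y ∈ S0
  · rw [Set.indicator_of_mem hy, Set.indicator_of_mem (hz.2 hy)]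
  · rw [Set.indicator_of_notMem hy, Set.indicator_of_notMem (fun h' => hy (hz.1 h'))]

/-- The balanced distribution function of `m dμ`. -/
noncomputable def prim (μ : Measure ℝ) (m : ℝ → F) (x : ℝ) : F :=
  (1 / 2 : ℝ) • ((∫ y in Set.Iio x, m y ∂μ) + ∫ y in Set.Iic x, m y ∂μ)

theorem setIntegral_Iio_sub {μ : Measure ℝ} {m : ℝ → F} (hm : Integrable m μ) {c d : ℝ}
    (hcd : c ≤ d) :
    (∫ y in Set.Iio d, m y ∂μ) - ∫ y in Set.Iio c, m y ∂μ = ∫ y in Set.Ico c d, m y ∂μ := by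
  rw [← Set.Iio_union_Ico_eq_Iio hcd, setIntegral_union _ measurableSet_Ico hm.integrableOn
    hm.integrableOn, add_sub_cancel_left]
  exact Set.disjoint_left.2 fun y hy hy' => not_lt.2 hy'.1 hy

theorem setIntegral_Iic_sub {μ : Measure ℝ} {m : ℝ → F} (hm : Integrable m μ) {c d : ℝ}
    (hcd : c ≤ d) :
    (∫ y in Set.Iic d, m y ∂μ) - ∫ y in Set.Iic c, m y ∂μ = ∫ y in Set.Ioc c d, m y ∂μ := by
  rw [← Set.Iic_union_Ioc_eq_Iic hcd, setIntegral_union _ measurableSet_Ioc hm.integrableOn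
    hm.integrableOn, add_sub_cancel_left]
  exact Set.disjoint_left.2 fun y hy hy' => not_lt.2 hy hy'.1

theorem prim_sub {μ : Measure ℝ} {m : ℝ → F} (hm : Integrable m μ) {c d : ℝ} (hcd : c ≤ d) :
    prim μ m d - prim μ m c =
      (1 / 2 : ℝ) • ((∫ y in Set.Ico c d, m y ∂μ) + ∫ y in Set.Ioc c d, m y ∂μ) := by
  rw [← setIntegral_Iio_sub hm hcd, ← setIntegral_Iic_sub hm hcd, prim, prim, ← smul_sub]
  congr 1
  abel

theorem norm_prim_sub_le {μ : Measure ℝ} {m : ℝ → F} (hm : Integrable m μ) {c d : ℝ}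
    (hcd : c ≤ d) :
    ‖prim μ m d - prim μ m c‖ ≤ prim μ (fun y => ‖m y‖) d - prim μ (fun y => ‖m y‖) c := by
  rw [prim_sub hm hcd, prim_sub hm.norm hcd, norm_smul, Real.norm_of_nonneg (by norm_num),
    smul_eq_mul]
  gcongr
  exact norm_add_le_of_le (norm_integral_le_integral_norm _) (norm_integral_le_integral_norm _)

theorem locallyBoundedVariationOn_of_norm_sub_le {G : Type*} [NormedAddCommGroup G]
    {u : ℝ → G} {P : ℝ → ℝ}
    (h : ∀ c d, c ≤ d → ‖u d - u c‖ ≤ P d - P c) (S : Set ℝ) :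
    LocallyBoundedVariationOn u S := by
  have hP : Monotone P := fun c d hcd => sub_nonneg.1 ((norm_nonneg _).trans (h c d hcd))
  have hle : ∀ T : Set ℝ, eVariationOn u T ≤ eVariationOn P T := by
    intro T
    refine iSup_mono fun p => Finset.sum_le_sum fun i _ => ?_
    have hmono := p.2.2.1 i.le_succ
    rw [edist_dist, edist_dist, dist_eq_norm, Real.dist_eq]
    exact ENNReal.ofReal_le_ofReal ((h _ _ hmono).trans (le_abs_self _))
  intro a b ha hb
  exact ne_top_of_le_ne_top ((hP.monotoneOn S).locallyBoundedVariationOn a b ha hb) (hle _)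

theorem tendsto_prim_left {μ : Measure ℝ} {m : ℝ → F} (hm : Integrable m μ) (x : ℝ) :
    Tendsto (prim μ m) (nhdsWithin x (Set.Iio x)) (nhds (∫ y in Set.Iio x, m y ∂μ)) := by
  have key : ∀ y, ∀ᶠ z in nhdsWithin x (Set.Iio x), (z < x ∧ (y < x → y < z)) := by
    intro y
    refine eventually_mem_nhdsWithin.and ?_
    by_cases hy : y < x
    · filter_upwards [mem_nhdsWithin_of_mem_nhds (Ioi_mem_nhds hy)] with z hz _ using hz
    · exact Eventually.of_forall fun z h => absurd h hy
  have h1 := tendsto_setIntegral_of_eventually hm (S := Set.Iio) (S0 := Set.Iio x)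
    (fun _ => measurableSet_Iio) measurableSet_Iio (l := nhdsWithin x (Set.Iio x))
    fun y => (key y).mono fun z hz => ⟨fun h => lt_trans h hz.1, hz.2⟩
  have h2 := tendsto_setIntegral_of_eventually hm (S := Set.Iic) (S0 := Set.Iio x)
    (fun _ => measurableSet_Iic) measurableSet_Iio (l := nhdsWithin x (Set.Iio x))
    fun y => (key y).mono fun z hz => ⟨fun h => lt_of_le_of_lt h hz.1, fun h => (hz.2 h).le⟩
  have h3 := (h1.add h2).const_smul (1 / 2 : ℝ)
  rwa [← two_smul ℝ, smul_smul, show (1 / 2 : ℝ) * 2 = 1 by norm_num, one_smul] at h3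

theorem tendsto_prim_right {μ : Measure ℝ} {m : ℝ → F} (hm : Integrable m μ) (x : ℝ) :
    Tendsto (prim μ m) (nhdsWithin x (Set.Ioi x)) (nhds (∫ y in Set.Iic x, m y ∂μ)) := by
  have key : ∀ y, ∀ᶠ z in nhdsWithin x (Set.Ioi x), (x < z ∧ (x < y → z < y)) := by
    intro y
    refine eventually_mem_nhdsWithin.and ?_
    by_cases hy : x < y
    · filter_upwards [mem_nhdsWithin_of_mem_nhds (Iio_mem_nhds hy)] with z hz _ using hz
    · exact Eventually.of_forall fun z h => absurd h hy
  have h1 := tendsto_setIntegral_of_eventually hm (S := Set.Iio) (S0 := Set.Iic x)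
    (fun _ => measurableSet_Iio) measurableSet_Iic (l := nhdsWithin x (Set.Ioi x))
    fun y => (key y).mono fun z hz => ⟨fun h => not_lt.1 fun h' => lt_asymm h (hz.2 h'),
      fun h => lt_of_le_of_lt h hz.1⟩
  have h2 := tendsto_setIntegral_of_eventually hm (S := Set.Iic) (S0 := Set.Iic x)
    (fun _ => measurableSet_Iic) measurableSet_Iic (l := nhdsWithin x (Set.Ioi x))
    fun y => (key y).mono fun z hz => ⟨fun h => not_lt.1 fun h' => not_lt.2 h (hz.2 h'),
      fun h => le_trans h hz.1.le⟩
  have h3 := (h1.add h2).const_smul (1 / 2 : ℝ)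
  rwa [← two_smul ℝ, smul_smul, show (1 / 2 : ℝ) * 2 = 1 by norm_num, one_smul] at h3

end Primitive

section Balanced

variable {E : Type*} [NormedAddCommGroup E] [NormedSpace ℂ E] [CompleteSpace E]

theorem setIntegral_Ico_eq {μ : Measure ℝ} {m : ℝ → E} {c d : ℝ}
    (hm : IntegrableOn m (Set.Icc c d) μ) (hcd : c < d) :
    ∫ y in Set.Ico c d, m y ∂μ = μ.real {c} • m c + ∫ y in Set.Ioo c d, m y ∂μ := by
  rw [← Set.Ioo_insert_left hcd, Set.insert_eq, setIntegral_union _ measurableSet_Ioo,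
    integral_singleton]
  · exact hm.mono_set (Set.singleton_subset_iff.2 (Set.left_mem_Icc.2 hcd.le))
  · exact hm.mono_set Set.Ioo_subset_Icc_self
  · simp

/-- If `L` plays the role of the left limits of `v`, then `v` is a balanced primitive. -/
theorem eq_add_bprim {μ : Measure ℝ} {m L v : ℝ → E} {x0 x : ℝ}
    (hm : IntegrableOn m (Set.uIcc x0 x) μ)
    (h1 : x0 ≤ x → L x - L x0 = ∫ y in Set.Ico x0 x, m y ∂μ)
    (h2 : x ≤ x0 → L x0 - L x = ∫ y in Set.Ico x x0, m y ∂μ)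
    (hv0 : v x0 = L x0 + (μ.real {x0} / 2) • m x0)
    (hv : v x = L x + (μ.real {x} / 2) • m x) :
    v x = v x0 + bprim μ x0 m x := by
  have half : ∀ y, μ.real {y} • m y = (μ.real {y} / 2) • m y + (μ.real {y} / 2) • m y := by
    intro y
    rw [← add_smul, add_halves]
  rcases lt_trichotomy x0 x with h | h | h
  · rw [Set.uIcc_of_le h.le] at hm
    have h3 := h1 h.le
    rw [setIntegral_Ico_eq hm h, half, sub_eq_iff_eq_add] at h3
    rw [bprim, side_of_lt h, one_smul, Set.uIoo_of_lt h, hv, hv0, h3]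
    abel
  · subst h
    rw [bprim_self, add_zero]
  · rw [Set.uIcc_of_ge h.le] at hm
    have h3 := h2 h.le
    rw [setIntegral_Ico_eq hm h, half, sub_eq_iff_eq_add] at h3
    rw [bprim, side_of_gt h, neg_one_smul, Set.uIoo_of_gt h, hv, hv0, h3]
    abel

theorem eq_prim_of_eq_bprim {μ : Measure ℝ} {m u : ℝ → E} (hm : Integrable m μ) {u0 : E}
    {x0 : ℝ} (hu : ∀ x, u x = u0 + bprim μ x0 m x) :
    ∀ x, u x = (u0 - prim μ m x0) + prim μ m x := by
  have h0 : ∀ x, prim μ m x = (∫ y in Set.Iio x, m y ∂μ) + (μ.real {x} / 2) • m x := by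
    intro x
    have h1 : ∫ y in Set.Iic x, m y ∂μ = μ.real {x} • m x + ∫ y in Set.Iio x, m y ∂μ := by
      rw [← Set.Iio_insert, Set.insert_eq, setIntegral_union _ measurableSet_Iio
        hm.integrableOn hm.integrableOn, integral_singleton]
      simp
    rw [prim, h1]
    module
  intro x
  rw [hu x, eq_add_bprim (v := prim μ m)
    (L := fun x => ∫ y in Set.Iio x, m y ∂μ) (x0 := x0) (x := x) hm.integrableOn
    (setIntegral_Iio_sub hm) (setIntegral_Iio_sub hm) (h0 x0) (h0 x)]
  abel

/-- A solution of the integral equation has one-sided limits, is balanced, has locally bounded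
variation, and its left limits have the prescribed increments. -/
theorem balanced_of_eq_bprim {μ : Measure ℝ} {m u : ℝ → E} (hm : Integrable m μ) {u0 : E}
    {x0 : ℝ} (hu : ∀ x, u x = u0 + bprim μ x0 m x) :
    (∀ S, LocallyBoundedVariationOn u S) ∧
    (∀ x, Tendsto u (nhdsWithin x (Set.Iio x)) (nhds (leftLim u x)) ∧
      Tendsto u (nhdsWithin x (Set.Ioi x)) (nhds (rightLim u x)) ∧
      u x = (1 / 2 : ℝ) • (leftLim u x + rightLim u x)) ∧
    ∀ c d, c ≤ d → leftLim u d - leftLim u c = ∫ y in Set.Ico c d, m y ∂μ := by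
  obtain ⟨k, hk⟩ : ∃ k, ∀ x, u x = k + prim μ m x := ⟨_, eq_prim_of_eq_bprim hm hu⟩
  obtain rfl : u = fun x => k + prim μ m x := funext hk
  have hl : ∀ x, Tendsto (fun x => k + prim μ m x) (nhdsWithin x (Set.Iio x))
      (nhds (k + ∫ y in Set.Iio x, m y ∂μ)) := fun x => (tendsto_prim_left hm x).const_add k
  have hr : ∀ x, Tendsto (fun x => k + prim μ m x) (nhdsWithin x (Set.Ioi x))
      (nhds (k + ∫ y in Set.Iic x, m y ∂μ)) := fun x => (tendsto_prim_right hm x).const_add k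
  have hL : ∀ x, leftLim (fun x => k + prim μ m x) x = k + ∫ y in Set.Iio x, m y ∂μ :=
    fun x => leftLim_eq_of_tendsto (hl x)
  have hR : ∀ x, rightLim (fun x => k + prim μ m x) x = k + ∫ y in Set.Iic x, m y ∂μ :=
    fun x => rightLim_eq_of_tendsto (hr x)
  refine ⟨fun S => ?_, fun x => ?_, fun c d hcd => ?_⟩
  · refine locallyBoundedVariationOn_of_norm_sub_le (P := prim μ fun y => ‖m y‖)
      (fun c d hcd => ?_) S
    rw [add_sub_add_left_eq_sub]
    exact norm_prim_sub_le hm hcd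
  · rw [hL, hR]
    refine ⟨hl x, hr x, ?_⟩
    simp only [prim]
    module
  · rw [hL, hL, add_sub_add_left_eq_sub]
    exact setIntegral_Iio_sub hm hcd

/-- A balanced function whose left limits have the increments of `m dμ` solves the integral
equation. -/
theorem eq_bprim_of_balanced {μ : Measure ℝ} {m v : ℝ → E} {s t : ℝ}
    (hbal : ∀ x ∈ Set.Ioo s t,
      Tendsto v (nhdsWithin x (Set.Ioi x)) (nhds (rightLim v x)) ∧
      v x = (1 / 2 : ℝ) • (leftLim v x + rightLim v x))
    (hm : ∀ c d, s < c → d < t → IntegrableOn m (Set.Icc c d) μ)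
    (hinc : ∀ c d, s < c → c ≤ d → d < t →
      leftLim v d - leftLim v c = ∫ y in Set.Ico c d, m y ∂μ)
    {x0 x : ℝ} (hx0 : x0 ∈ Set.Ioo s t) (hx : x ∈ Set.Ioo s t) :
    v x = v x0 + bprim μ x0 m x := by
  -- the jump of `v` across an atom, from the increments of the left limits
  have hval : ∀ x ∈ Set.Ioo s t, v x = leftLim v x + (μ.real {x} / 2) • m x := by
    intro x hx
    obtain ⟨d, hxd, hdt⟩ := exists_between hx.2
    have hint : Integrable m (μ.restrict (Set.Icc x d)) := hm x d hx.1 hdt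
    have h1 := tendsto_setIntegral_of_eventually hint (S := Set.Ico x) (S0 := {x})
      (fun _ => measurableSet_Ico) (measurableSet_singleton x)
      (l := nhdsWithin x (Set.Ioi x)) (fun y => by
        rcases le_or_gt y x with hy | hy
        · filter_upwards [self_mem_nhdsWithin] with z (hz : x < z)
          exact ⟨fun h => le_antisymm hy h.1, fun h => by
            rw [Set.mem_singleton_iff.1 h]; exact ⟨le_rfl, hz⟩⟩
        · filter_upwards [mem_nhdsWithin_of_mem_nhds (Iio_mem_nhds hy)] with z (hz : z < y)
          exact ⟨fun h => absurd h.2 hz.le.not_gt, fun h => absurd h hy.ne'⟩)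
    rw [Measure.restrict_restrict_of_subset
      (Set.singleton_subset_iff.2 (Set.left_mem_Icc.2 hxd.le)), integral_singleton] at h1
    have h2 : Tendsto (leftLim v) (nhdsWithin x (Set.Ioi x))
        (nhds (leftLim v x + μ.real {x} • m x)) := by
      refine (h1.const_add (leftLim v x)).congr' ?_
      filter_upwards [self_mem_nhdsWithin, mem_nhdsWithin_of_mem_nhds (Iio_mem_nhds hxd)]
        with z (hz : x < z) (hzd : z < d)
      rw [Measure.restrict_restrict_of_subset
        (Set.Ico_subset_Icc_self.trans (Set.Icc_subset_Icc_right hzd.le)),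
        ← hinc x z hx.1 hz.le (hzd.trans hdt)]
      abel
    have h3 := rightLim_leftLim (hbal x hx).1
    rw [rightLim_eq_of_tendsto h2] at h3
    rw [(hbal x hx).2, ← h3]
    module
  refine eq_add_bprim (L := leftLim v) ?_ (fun h => hinc _ _ hx0.1 h hx.2)
    (fun h => hinc _ _ hx.1 h hx0.2) (hval x0 hx0) (hval x hx)
  exact hm _ _ (lt_min hx0.1 hx.1) (max_lt hx0.2 hx.2)

end Balanced

/-- Both the real and the imaginary part of each component are differences of monotone
functions. -/
theorem aestronglyMeasurable_of_locallyBoundedVariationOn {n : ℕ} {v : ℝ → Fin n → ℂ}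
    {S : Set ℝ} (hv : LocallyBoundedVariationOn v S) (hS : MeasurableSet S) (μ : Measure ℝ) :
    AEStronglyMeasurable v (μ.restrict S) := by
  have key : ∀ {φ : (Fin n → ℂ) → ℝ}, LipschitzWith 1 φ →
      AEMeasurable (fun x => φ (v x)) (μ.restrict S) := by
    intro φ hφ
    obtain ⟨p, q, hp, hq, hpq⟩ :=
      (hφ.comp_locallyBoundedVariationOn hv).exists_monotoneOn_sub_monotoneOn
    have h1 : (fun x => φ (v x)) = p - q := hpq
    rw [h1]
    exact (aemeasurable_restrict_of_monotoneOn hS hp).sub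
      (aemeasurable_restrict_of_monotoneOn hS hq)
  have hre : LipschitzWith 1 Complex.re := LipschitzWith.of_dist_le_mul fun z w => by
    rw [NNReal.coe_one, one_mul, Real.dist_eq, ← Complex.sub_re, dist_eq_norm]
    exact Complex.abs_re_le_norm _
  have him : LipschitzWith 1 Complex.im := LipschitzWith.of_dist_le_mul fun z w => by
    rw [NNReal.coe_one, one_mul, Real.dist_eq, ← Complex.sub_im, dist_eq_norm]
    exact Complex.abs_im_le_norm _
  have hmeas : AEMeasurable v (μ.restrict S) := by
    refine aemeasurable_pi_lambda _ fun i => ?_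
    have h1 := key (φ := fun z => (z i).re) (by
      have := hre.comp (LipschitzWith.eval (α := fun _ : Fin n => ℂ) i)
      rwa [one_mul] at this)
    have h2 := key (φ := fun z => (z i).im) (by
      have := him.comp (LipschitzWith.eval (α := fun _ : Fin n => ℂ) i)
      rwa [one_mul] at this)
    have h3 := (Complex.measurable_ofReal.comp_aemeasurable h1).add
      ((Complex.measurable_ofReal.comp_aemeasurable h2).mul_const Complex.I)
    refine h3.congr (Eventually.of_forall fun x => ?_)
    exact Complex.re_add_im _
  exact hmeas.aestronglyMeasurable

theorem exists_norm_le_of_locallyBoundedVariationOn {F : Type*} [NormedAddCommGroup F]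
    {v : ℝ → F} {S : Set ℝ} (hv : LocallyBoundedVariationOn v S) {c d : ℝ} (hc : c ∈ S)
    (hd : d ∈ S) (hS : S.OrdConnected) : ∃ R, ∀ x ∈ Set.Icc c d, ‖v x‖ ≤ R := by
  have hb : BoundedVariationOn v (Set.Icc c d) := by
    have := hv c d hc hd
    rwa [Set.inter_eq_self_of_subset_right (hS.out hc hd)] at this
  refine ⟨‖v c‖ + (eVariationOn v (Set.Icc c d)).toReal, fun x hx => ?_⟩
  have h1 := hb.dist_le hx (Set.left_mem_Icc.2 (hx.1.trans hx.2))
  rw [dist_eq_norm] at h1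
  have h2 := norm_add_le (v c) (v x - v c)
  rw [add_sub_cancel] at h2
  exact h2.trans (by gcongr)

/-! ### Uniqueness and dependence on the parameter -/

section Parameter

variable {E : Type*} [NormedAddCommGroup E] [NormedSpace ℂ E]

theorem bprim_sub {μ : Measure ℝ} {x0 x : ℝ} {m₁ m₂ : ℝ → E}
    (h₁ : IntegrableOn m₁ (Set.uIoo x0 x) μ) (h₂ : IntegrableOn m₂ (Set.uIoo x0 x) μ) :
    bprim μ x0 (fun y => m₁ y - m₂ y) x = bprim μ x0 m₁ x - bprim μ x0 m₂ x := by
  simp only [bprim]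
  rw [integral_sub h₁ h₂]
  module

theorem bprim_smul (μ : Measure ℝ) (x0 x : ℝ) (c : ℂ) (m : ℝ → E) :
    bprim μ x0 (fun y => c • m y) x = c • bprim μ x0 m x := by
  simp only [bprim]
  rw [integral_smul]
  simp only [smul_add, smul_comm c]

/-- The integral equation determines bounded solutions. -/
theorem eqOn_of_eq_bprim {μ : Measure ℝ} {A : ℝ → E →L[ℂ] E} (hA : Integrable A μ)
    (hD : NondegenerateJumps μ A) {x0 : ℝ} {S : Set ℝ} (hx0 : x0 ∈ S) (hS : S.OrdConnected)
    {u v g : ℝ → E} {u0 : E} {R R' : ℝ} (huR : ∀ x ∈ S, ‖u x‖ ≤ R) (hvR : ∀ x ∈ S, ‖v x‖ ≤ R')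
    (hui : IntegrableOn (fun y => A y (u y) + g y) S μ)
    (hvi : IntegrableOn (fun y => A y (v y) + g y) S μ)
    (hu : ∀ x ∈ S, u x = u0 + bprim μ x0 (fun y => A y (u y) + g y) x)
    (hv : ∀ x ∈ S, v x = u0 + bprim μ x0 (fun y => A y (v y) + g y) x) :
    Set.EqOn u v S := by
  obtain ⟨C, -, hC⟩ := exists_gronwall hA hD x0
  intro x hx
  have h1 := hC S (fun x => u x - v x) (fun _ => 0) 0 (R + R') hx0 hS (integrable_zero _ _ _)
    (fun x hx => norm_sub_le_of_le (huR x hx) (hvR x hx)) (fun x hx => by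
      have hsub : Set.uIoo x0 x ⊆ S := Set.uIoo_subset_uIcc_self.trans (hS.uIcc_subset hx0 hx)
      have h2 := bprim_sub (hui.mono_set hsub) (hvi.mono_set hsub)
      simp only [add_sub_add_right_eq_sub, ← map_sub] at h2
      simp only [add_zero, zero_add]
      rw [h2, hu x hx, hv x hx]
      abel) x hx
  simpa [sub_eq_zero] using h1

/-- All but finitely many atoms are so small that the jump condition persists for every nearby
parameter; at each of the remaining ones it is an open condition. -/
theorem isOpen_nondegenerateJumps [CompleteSpace E] {μ : Measure ℝ} [IsFiniteMeasure μ]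
    {A₀ B : ℝ → E →L[ℂ] E} (hA₀ : Integrable A₀ μ) (hB : Integrable B μ) :
    IsOpen {lam : ℂ | NondegenerateJumps μ fun x => A₀ x + lam • B x} := by
  rw [isOpen_iff_mem_nhds]
  intro lam0 h0
  have hκ : Integrable (fun x => ‖A₀ x + lam0 • B x‖ + ‖B x‖) μ :=
    (hA₀.add (hB.smul lam0)).norm.add hB.norm
  have hfin := finite_large_atoms μ hκ fun x => by positivity
  have hbig : ∀ x, ∀ᶠ lam in nhds lam0,
      IsUnit (1 + (μ.real {x} / 2) • (A₀ x + lam • B x)) ∧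
      IsUnit (1 - (μ.real {x} / 2) • (A₀ x + lam • B x)) := by
    intro x
    have hc1 : Continuous fun lam : ℂ => 1 + (μ.real {x} / 2) • (A₀ x + lam • B x) := by
      fun_prop
    have hc2 : Continuous fun lam : ℂ => 1 - (μ.real {x} / 2) • (A₀ x + lam • B x) := by
      fun_prop
    exact (hc1.continuousAt.eventually (Units.isOpen.mem_nhds (h0 x).1)).and
      (hc2.continuousAt.eventually (Units.isOpen.mem_nhds (h0 x).2))
  have hfin' := (eventually_all_finite hfin).2 fun x _ => hbig x
  filter_upwards [hfin', Metric.ball_mem_nhds lam0 one_pos] with lam h1 h2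
  intro x
  by_cases hx : 1 ≤ μ.real {x} * (‖A₀ x + lam0 • B x‖ + ‖B x‖)
  · exact h1 x hx
  · have h3 : ‖A₀ x + lam • B x‖ ≤ ‖A₀ x + lam0 • B x‖ + ‖B x‖ := by
      have h4 : A₀ x + lam • B x = (A₀ x + lam0 • B x) + (lam - lam0) • B x := by module
      rw [h4]
      refine norm_add_le_of_le le_rfl ?_
      rw [norm_smul]
      exact mul_le_of_le_one_left (norm_nonneg _) (mem_ball_iff_norm.1 h2).le
    have h5 : ‖(μ.real {x} / 2) • (A₀ x + lam • B x)‖ < 1 := by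
      have h6 : 0 ≤ μ.real {x} := measureReal_nonneg
      rw [norm_smul, Real.norm_of_nonneg (by positivity)]
      have := mul_le_mul_of_nonneg_left h3 h6
      linarith
    refine ⟨?_, isUnit_one_sub_of_norm_lt_one h5⟩
    rw [← sub_neg_eq_add]
    exact isUnit_one_sub_of_norm_lt_one (by rwa [norm_neg])

/-- If `u lam` solves the integral equation with coefficient `A₀ + lam • B`, then the formal
derivative with respect to `lam` solves the equation with inhomogeneity `B u`, and the remainder
of the first order expansion is quadratic by the Gronwall bound. -/
theorem differentiableAt_solution [CompleteSpace E] [MeasurableSpace E] [BorelSpace E]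
    [SecondCountableTopology E] {μ : Measure ℝ} [IsFiniteMeasure μ] {A₀ B : ℝ → E →L[ℂ] E}
    (hA₀ : Integrable A₀ μ) (hB : Integrable B μ) {x0 : ℝ} {g : ℝ → E} (hg : Integrable g μ)
    {u0 : E} {u : ℂ → ℝ → E} {R : ℂ → ℝ} {lam0 : ℂ} {Ω : Set ℂ} (hΩ : Ω ∈ nhds lam0)
    (hD : NondegenerateJumps μ fun x => A₀ x + lam0 • B x)
    (hum : ∀ lam ∈ Ω, Measurable (u lam)) (huR : ∀ lam ∈ Ω, ∀ x, ‖u lam x‖ ≤ R lam)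
    (hu : ∀ lam ∈ Ω, ∀ x,
      u lam x = u0 + bprim μ x0 (fun y => (A₀ y + lam • B y) (u lam y) + g y) x) (x : ℝ) :
    DifferentiableAt ℂ (fun lam => u lam x) lam0 := by
  have h0 : lam0 ∈ Ω := mem_of_mem_nhds hΩ
  have hA : ∀ lam : ℂ, Integrable (fun x => A₀ x + lam • B x) μ := fun lam =>
    hA₀.add (hB.smul lam)
  have hBu : ∀ lam ∈ Ω, Integrable (fun y => B y (u lam y)) μ := fun lam hl =>
    integrable_clm_apply hB (hum lam hl).aestronglyMeasurable (Eventually.of_forall (huR lam hl))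
  have hAu : ∀ lam ∈ Ω, Integrable (fun y => (A₀ y + lam • B y) (u lam y) + g y) μ :=
    fun lam hl => (integrable_clm_apply (hA lam) (hum lam hl).aestronglyMeasurable
      (Eventually.of_forall (huR lam hl))).add hg
  obtain ⟨C, hC0, hC⟩ := exists_gronwall (hA lam0) hD x0
  obtain ⟨v, Rv, hvm, hvR, hv⟩ := exists_solution (hA lam0) hD x0 (hBu lam0 h0) 0
  have hAv : Integrable (fun y => (A₀ y + lam0 • B y) (v y) + B y (u lam0 y)) μ :=
    (integrable_clm_apply (hA lam0) hvm.aestronglyMeasurable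
    (Eventually.of_forall hvR)).add (hBu lam0 h0)
  obtain ⟨M, hM⟩ : ∃ M, M = ∫ y, ‖B y‖ ∂μ := ⟨_, rfl⟩
  have hM0 : 0 ≤ M := hM ▸ integral_nonneg fun y => norm_nonneg _
  have hR0 : 0 ≤ R lam0 := (norm_nonneg _).trans (huR lam0 h0 x0)
  have hBle : ∀ (c : ℂ) (w : ℝ → E) (r : ℝ), (∀ y, ‖w y‖ ≤ r) →
      ∫ y, ‖c • B y (w y)‖ ∂μ ≤ ‖c‖ * M * r := by
    intro c w r hr
    have h1 : ∫ y, ‖c • B y (w y)‖ ∂μ ≤ ∫ y, ‖c‖ * (‖B y‖ * r) ∂μ := by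
      refine integral_mono_of_nonneg (Eventually.of_forall fun y => norm_nonneg _)
        ((hB.norm.mul_const r).const_mul _) (Eventually.of_forall fun y => ?_)
      change ‖c • B y (w y)‖ ≤ ‖c‖ * (‖B y‖ * r)
      rw [norm_smul]
      exact mul_le_mul_of_nonneg_left ((B y).le_opNorm_of_le (hr y)) (norm_nonneg _)
    rwa [integral_const_mul, integral_mul_const, ← hM, ← mul_assoc] at h1
  -- the difference of two solutions
  have hδ : ∀ lam ∈ Ω, ∀ x, u lam x - u lam0 x = 0 + bprim μ x0
      (fun y => (A₀ y + lam0 • B y) (u lam y - u lam0 y) + (lam - lam0) • B y (u lam y)) x := by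
    intro lam hl x
    have h1 : (fun y => (A₀ y + lam0 • B y) (u lam y - u lam0 y) +
        (lam - lam0) • B y (u lam y)) = fun y => ((A₀ y + lam • B y) (u lam y) + g y) -
          ((A₀ y + lam0 • B y) (u lam0 y) + g y) := by
      funext y
      simp only [map_sub, add_apply, smul_apply]
      module
    rw [h1, bprim_sub (hAu lam hl).integrableOn (hAu lam0 h0).integrableOn, hu lam hl x,
      hu lam0 h0 x]
    abel
  have hδle : ∀ lam ∈ Ω, ∀ r, (∀ y, ‖u lam y‖ ≤ r) →
      ∀ x, ‖u lam x - u lam0 x‖ ≤ C * (‖lam - lam0‖ * M * r) := by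
    intro lam hl r hr x
    have h1 := hC Set.univ _ _ 0 (R lam + R lam0) (Set.mem_univ _) Set.ordConnected_univ
      ((hBu lam hl).smul (lam - lam0))
      (fun x _ => norm_sub_le_of_le (huR lam hl x) (huR lam0 h0 x)) (fun x _ => hδ lam hl x) x
      (Set.mem_univ _)
    rw [norm_zero, zero_add] at h1
    exact h1.trans (mul_le_mul_of_nonneg_left (hBle _ _ r hr) hC0)
  -- the remainder of the first order expansion
  have hr : ∀ lam ∈ Ω, ∀ x, u lam x - u lam0 x - (lam - lam0) • v x = 0 + bprim μ x0
      (fun y => (A₀ y + lam0 • B y) (u lam y - u lam0 y - (lam - lam0) • v y) +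
        (lam - lam0) • B y (u lam y - u lam0 y)) x := by
    intro lam hl x
    have h1 : (fun y => (A₀ y + lam0 • B y) (u lam y - u lam0 y - (lam - lam0) • v y) +
        (lam - lam0) • B y (u lam y - u lam0 y)) = fun y =>
          ((A₀ y + lam0 • B y) (u lam y - u lam0 y) + (lam - lam0) • B y (u lam y)) -
          (lam - lam0) • ((A₀ y + lam0 • B y) (v y) + B y (u lam0 y)) := by
      funext y
      simp only [map_sub, map_smul, add_apply, smul_apply]
      module
    have hi1 : Integrable (fun y => (A₀ y + lam0 • B y) (u lam y - u lam0 y) +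
        (lam - lam0) • B y (u lam y)) μ :=
      (integrable_clm_apply (hA lam0) ((hum lam hl).sub (hum lam0 h0)).aestronglyMeasurable
        (Eventually.of_forall fun x =>
          norm_sub_le_of_le (huR lam hl x) (huR lam0 h0 x))).add ((hBu lam hl).smul _)
    have hi2 : Integrable (fun y => (lam - lam0) •
        ((A₀ y + lam0 • B y) (v y) + B y (u lam0 y))) μ := hAv.smul (lam - lam0)
    rw [h1, bprim_sub hi1.integrableOn hi2.integrableOn, bprim_smul,
      hδ lam hl x, hv x]
    simp only [zero_add]
  have hrle : ∀ lam ∈ Ω, ∀ d, (∀ y, ‖u lam y - u lam0 y‖ ≤ d) →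
      ‖u lam x - u lam0 x - (lam - lam0) • v x‖ ≤ C * (‖lam - lam0‖ * M * d) := by
    intro lam hl d hd
    have hi : Integrable (fun y => (lam - lam0) • B y (u lam y - u lam0 y)) μ :=
      (integrable_clm_apply hB ((hum lam hl).sub (hum lam0 h0)).aestronglyMeasurable
        (Eventually.of_forall hd)).smul _
    have h1 := hC Set.univ _ _ 0 (R lam + R lam0 + ‖lam - lam0‖ * Rv) (Set.mem_univ _)
      Set.ordConnected_univ hi
      (fun x _ => norm_sub_le_of_le (norm_sub_le_of_le (huR lam hl x) (huR lam0 h0 x)) (by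
        rw [norm_smul]
        exact mul_le_mul_of_nonneg_left (hvR x) (norm_nonneg _)))
      (fun x _ => hr lam hl x) x (Set.mem_univ _)
    rw [norm_zero, zero_add] at h1
    exact h1.trans (mul_le_mul_of_nonneg_left (hBle _ _ d hd) hC0)
  refine HasDerivAt.differentiableAt (f' := v x) ?_
  rw [hasDerivAt_iff_isLittleO]
  refine Asymptotics.IsBigO.trans_isLittleO (g := fun lam : ℂ => ‖lam - lam0‖ ^ 2) ?_
    (Asymptotics.isLittleO_pow_sub_sub lam0 one_lt_two)
  have hsmall : ∀ᶠ lam in nhds lam0, C * (‖lam - lam0‖ * M) < 1 / 2 := by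
    have hc : Continuous fun lam : ℂ => C * (‖lam - lam0‖ * M) := by fun_prop
    refine hc.continuousAt.eventually (gt_mem_nhds ?_)
    simp
  refine Asymptotics.IsBigO.of_bound (C * M * (C * (M * (2 * R lam0)))) ?_
  filter_upwards [hΩ, hsmall] with lam hl hsm
  -- absorbing the supremum of `u lam` gives a bound that does not depend on `lam`
  have hb : ∀ y, ‖u lam y‖ ≤ 2 * R lam0 := by
    have hbdd : BddAbove (Set.range fun y => ‖u lam y‖) := ⟨R lam, by
      rintro _ ⟨y, rfl⟩; exact huR lam hl y⟩
    have hle : ∀ y, ‖u lam y‖ ≤ ⨆ y, ‖u lam y‖ := fun y => le_ciSup hbdd y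
    have hs0 : 0 ≤ ⨆ y, ‖u lam y‖ := (norm_nonneg _).trans (hle x0)
    have h1 : ⨆ y, ‖u lam y‖ ≤ R lam0 + 1 / 2 * ⨆ y, ‖u lam y‖ := by
      refine ciSup_le fun y => ?_
      have h2 := hδle lam hl _ hle y
      have h3 := norm_le_norm_add_norm_sub' (u lam y) (u lam0 y)
      have h4 := huR lam0 h0 y
      have h5 := mul_le_mul_of_nonneg_right hsm.le hs0
      rw [mul_assoc, mul_assoc] at h5
      rw [mul_assoc] at h2
      linarith
    intro y
    have := hle y
    linarith
  have h1 := hrle lam hl _ (hδle lam hl _ hb)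
  rw [norm_pow, norm_norm]
  refine h1.trans (le_of_eq ?_)
  ring

theorem nondegenerateJumps_iff (μ : Measure ℝ) (A : ℝ → E →L[ℂ] E) :
    NondegenerateJumps μ A ↔ ∀ x, IsUnit (1 + ((μ.real {x} / 2 : ℝ) : ℂ) • A x) ∧
      IsUnit (1 - ((μ.real {x} / 2 : ℝ) : ℂ) • A x) := by
  simp only [NondegenerateJumps, Complex.coe_smul]

theorem integrable_sum_smul {ι : Type*} [Fintype ι] {μ : Measure ℝ} {M : ℝ → ι → ι → ℂ}
    (hM : ∀ i j, Integrable (fun x => M x i j) μ) (c : ι → ι → E) :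
    Integrable (fun x => ∑ i, ∑ j, M x i j • c i j) μ :=
  integrable_finsetSum _ fun i _ => integrable_finsetSum _ fun j _ => (hM i j).smul_const _

theorem one_add_neg_smul (c : ℂ) (T : E →L[ℂ] E) : 1 + -c • T = 1 - c • T := by
  rw [neg_smul, ← sub_eq_add_neg]

end Parameter

/-! ### Matrix coefficients -/

/-- A square matrix as a continuous operator on `ℂⁿ`. -/
noncomputable def matOp (n : ℕ) :
    Matrix (Fin n) (Fin n) ℂ ≃ₐ[ℂ] ((Fin n → ℂ) →L[ℂ] (Fin n → ℂ)) :=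
  Matrix.toLinAlgEquiv'.trans (Module.End.toContinuousLinearMap (Fin n → ℂ))

theorem matOp_apply {n : ℕ} (M : Matrix (Fin n) (Fin n) ℂ) (v : Fin n → ℂ) :
    matOp n M v = M.mulVec v := rfl

theorem integrable_matOp {n : ℕ} {μ : Measure ℝ} {M : ℝ → Matrix (Fin n) (Fin n) ℂ}
    (hM : ∀ i j, Integrable (fun x => M x i j) μ) : Integrable (fun x => matOp n (M x)) μ := by
  have h1 : (fun x => matOp n (M x)) =
      fun x => ∑ i, ∑ j, M x i j • matOp n (Matrix.single i j 1) := by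
    funext x
    conv_lhs => rw [Matrix.matrix_eq_sum_single (M x)]
    simp only [map_sum, ← map_smul, Matrix.smul_single, smul_eq_mul, mul_one]
  rw [h1]
  exact integrable_sum_smul hM fun i j => matOp n (Matrix.single i j 1)

theorem isUnit_jump_iff {n : ℕ} {J : Matrix (Fin n) (Fin n) ℂ} (hJ : IsUnit J)
    (X : Matrix (Fin n) (Fin n) ℂ) (r : ℝ) :
    IsUnit ((2 : ℂ) • J + r • X) ↔
      IsUnit (1 + ((r / 2 : ℝ) : ℂ) • matOp n (J⁻¹ * X)) := by
  have h2 : IsUnit ((2 : ℂ) • J) := by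
    have := hJ.smul (Units.mk0 (2 : ℂ) two_ne_zero)
    exact this
  have hJJ : J * J⁻¹ = 1 := Matrix.mul_nonsing_inv J ((Matrix.isUnit_iff_isUnit_det J).1 hJ)
  have h3 : (2 : ℂ) • J + r • X = (2 : ℂ) • J * (1 + ((r / 2 : ℝ) : ℂ) • (J⁻¹ * X)) := by
    rw [mul_add, mul_one, smul_mul_smul_comm, ← mul_assoc, hJJ, one_mul, ← Complex.coe_smul]
    congr 2
    push_cast
    ring
  have h4 : 1 + ((r / 2 : ℝ) : ℂ) • matOp n (J⁻¹ * X) =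
      matOp n (1 + ((r / 2 : ℝ) : ℂ) • (J⁻¹ * X)) := by
    rw [map_add, map_one, map_smul]
  obtain ⟨w, hw⟩ := h2
  rw [h3, h4, ← hw, Units.isUnit_units_mul]
  exact (MulEquiv.isUnit_map (matOp n)).symm

theorem real_restrict_singleton (ν : Measure ℝ) {S : Set ℝ} {x : ℝ} (hx : x ∈ S) :
    (ν.restrict S).real {x} = (ν {x}).toReal := by
  rw [measureReal_restrict_apply (measurableSet_singleton x),
    Set.inter_eq_self_of_subset_left (Set.singleton_subset_iff.2 hx), Measure.real]

/-- **Analytic dependence on the spectral parameter.**  Let `[s,t] ⊂ (a,b)`,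
`x0 ∈ (s,t)`, `u0 ∈ ℂⁿ`, and let
`Ω = {λ : ∀ t' ∈ [s,t], 2J ± ν({t'})·(λ𝒲(t') − 𝒬(t')) invertible}`.  Then `Ω` is open;
for each `λ ∈ Ω` the initial value problem `Ju' + qu = λwu + wf`, `u(x0) = u0` has a
unique balanced solution `u(·,λ)` on `(s,t)`; and for each `x ∈ (s,t)` the map
`λ ↦ u(x,λ)` is analytic (complex differentiable) on `Ω`. -/
theorem stmt_6 (a b : ℝ) (n : ℕ) (ν : Measure ℝ)
    (hν : ∀ c d : ℝ, a < c → d < b → ν (Set.Icc c d) < ⊤)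
    (J : Matrix (Fin n) (Fin n) ℂ) (hJ : IsUnit J)
    (Q W : ℝ → Matrix (Fin n) (Fin n) ℂ)
    (hQ : ∀ (i j : Fin n) (c d : ℝ), a < c → d < b →
      IntegrableOn (fun x => Q x i j) (Set.Icc c d) ν)
    (hW : ∀ (i j : Fin n) (c d : ℝ), a < c → d < b →
      IntegrableOn (fun x => W x i j) (Set.Icc c d) ν)
    (f : ℝ → Fin n → ℂ)
    (hf : ∀ c d : ℝ, a < c → d < b →
      IntegrableOn (fun x => (W x).mulVec (f x)) (Set.Icc c d) ν)
    (s t : ℝ) (has : a < s) (hst : s ≤ t) (htb : t < b)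
    (x0 : ℝ) (hx0 : x0 ∈ Set.Ioo s t) (u0 : Fin n → ℂ)
    (Ω : Set ℂ)
    (hΩ : Ω = {lam : ℂ | ∀ t' ∈ Set.Icc s t,
      IsUnit ((2 : ℂ) • J + (ν {t'}).toReal • (lam • W t' - Q t')) ∧
      IsUnit ((2 : ℂ) • J - (ν {t'}).toReal • (lam • W t' - Q t'))}) :
    IsOpen Ω ∧
    ∃ u : ℂ → ℝ → Fin n → ℂ,
      (∀ lam ∈ Ω,
        (IsBalancedSolutionH s t ν J Q W lam f (u lam) ∧ u lam x0 = u0) ∧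
        ∀ v : ℝ → Fin n → ℂ, IsBalancedSolutionH s t ν J Q W lam f v → v x0 = u0 →
          Set.EqOn (u lam) v (Set.Ioo s t)) ∧
      ∀ x ∈ Set.Ioo s t, DifferentiableOn ℂ (fun lam => u lam x) Ω := by
  obtain ⟨μ, hμ⟩ : ∃ μ, μ = ν.restrict (Set.Icc s t) := ⟨_, rfl⟩
  have hμfin : IsFiniteMeasure μ := by
    rw [hμ]
    exact isFiniteMeasure_restrict.2 (hν s t has htb).ne
  obtain ⟨A₀, hA₀⟩ : ∃ A₀ : ℝ → (Fin n → ℂ) →L[ℂ] (Fin n → ℂ),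
      ∀ x, A₀ x = -(matOp n J⁻¹ * matOp n (Q x)) := ⟨_, fun _ => rfl⟩
  obtain ⟨B, hB⟩ : ∃ B : ℝ → (Fin n → ℂ) →L[ℂ] (Fin n → ℂ),
      ∀ x, B x = matOp n J⁻¹ * matOp n (W x) := ⟨_, fun _ => rfl⟩
  obtain ⟨g, hg⟩ : ∃ g : ℝ → Fin n → ℂ, ∀ x, g x = matOp n J⁻¹ ((W x).mulVec (f x)) :=
    ⟨_, fun _ => rfl⟩
  have hA₀i : Integrable A₀ μ := by
    rw [funext hA₀, hμ]
    exact ((integrable_matOp fun i j => hQ i j s t has htb).const_mul _).neg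
  have hBi : Integrable B μ := by
    rw [funext hB, hμ]
    exact (integrable_matOp fun i j => hW i j s t has htb).const_mul _
  have hgi : Integrable g μ := by
    rw [funext hg, hμ]
    exact (matOp n J⁻¹).integrable_comp (hf s t has htb)
  have hAi : ∀ lam : ℂ, Integrable (fun x => A₀ x + lam • B x) μ := fun lam =>
    hA₀i.add (hBi.smul lam)
  have hAmat : ∀ (lam : ℂ) x, A₀ x + lam • B x = matOp n (J⁻¹ * (lam • W x - Q x)) := by
    intro lam x
    rw [hA₀, hB, ← map_mul, ← map_mul, ← map_smul, ← map_neg, ← map_add, mul_sub,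
      mul_smul_comm]
    congr 1
    abel
  have hrhs : ∀ (lam : ℂ) (w : ℝ → Fin n → ℂ),
      (fun y => (J⁻¹).mulVec ((lam • W y - Q y).mulVec (w y) + (W y).mulVec (f y))) =
        fun y => (A₀ y + lam • B y) (w y) + g y := by
    intro lam w
    funext y
    rw [hAmat, hg, matOp_apply, matOp_apply, Matrix.mulVec_add, Matrix.mulVec_mulVec]
  have hset : ∀ (m : ℝ → Fin n → ℂ) {c d : ℝ}, s < c → d < t →
      ∫ y in Set.Ico c d, m y ∂ν = ∫ y in Set.Ico c d, m y ∂μ := by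
    intro m c d hc hd
    rw [hμ, Measure.restrict_restrict_of_subset
      (Set.Ico_subset_Icc_self.trans (Set.Icc_subset_Icc hc.le hd.le))]
  have hΩ' : Ω = {lam : ℂ | NondegenerateJumps μ fun x => A₀ x + lam • B x} := by
    rw [hΩ]
    ext lam
    change _ ↔ NondegenerateJumps μ fun x => A₀ x + lam • B x
    rw [nondegenerateJumps_iff]
    have hsub : ∀ x, IsUnit ((2 : ℂ) • J - (ν {x}).toReal • (lam • W x - Q x)) ↔
        IsUnit (1 - (((ν {x}).toReal / 2 : ℝ) : ℂ) • matOp n (J⁻¹ * (lam • W x - Q x))) := by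
      intro x
      rw [sub_eq_add_neg, ← neg_smul, isUnit_jump_iff hJ, neg_div, Complex.ofReal_neg]
      exact iff_of_eq (congrArg IsUnit (one_add_neg_smul _ _))
    refine ⟨fun h x => ?_, fun h x hx => ?_⟩
    · by_cases hx : x ∈ Set.Icc s t
      · have h1 := h x hx
        rw [isUnit_jump_iff hJ, hsub] at h1
        rw [hμ, real_restrict_singleton ν hx, hAmat]
        exact h1
      · have h0 : μ.real {x} = 0 := by
          rw [hμ, measureReal_restrict_apply (measurableSet_singleton x),
            Set.singleton_inter_eq_empty.2 hx, measureReal_empty]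
        rw [h0, zero_div, Complex.ofReal_zero, zero_smul, add_zero, sub_zero]
        exact ⟨isUnit_one, isUnit_one⟩
    · have h1 := h x
      rw [hμ, real_restrict_singleton ν hx, hAmat] at h1
      rw [isUnit_jump_iff hJ, hsub]
      exact h1
  have hopen : IsOpen Ω := hΩ' ▸ isOpen_nondegenerateJumps hA₀i hBi
  have hD : ∀ lam ∈ Ω, NondegenerateJumps μ fun x => A₀ x + lam • B x := by
    intro lam hl
    rw [hΩ'] at hl
    exact hl
  have hex : ∀ lam : ℂ, ∃ (u : ℝ → Fin n → ℂ) (R : ℝ), lam ∈ Ω → Measurable u ∧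
      (∀ x, ‖u x‖ ≤ R) ∧ ∀ x, u x = u0 + bprim μ x0
        (fun y => (A₀ y + lam • B y) (u y) + g y) x := by
    intro lam
    by_cases hl : lam ∈ Ω
    · obtain ⟨u, R, hu⟩ := exists_solution (hAi lam) (hD lam hl) x0 hgi u0
      exact ⟨u, R, fun _ => hu⟩
    · exact ⟨0, 0, fun h => absurd h hl⟩
  choose u R hu using hex
  have hui : ∀ lam ∈ Ω, Integrable (fun y => (A₀ y + lam • B y) (u lam y) + g y) μ :=
    fun lam hl => (integrable_clm_apply (hAi lam) (hu lam hl).1.aestronglyMeasurable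
      (Eventually.of_forall (hu lam hl).2.1)).add hgi
  have havg : ∀ l r : Fin n → ℂ, (l + r) / 2 = (1 / 2 : ℝ) • (l + r) := by
    intro l r
    ext i
    simp [div_eq_inv_mul, mul_add]
  refine ⟨hopen, u, fun lam hl => ⟨⟨?_, ?_⟩, fun v hv hv0 x hx => ?_⟩, fun x _ lam hl => ?_⟩
  · obtain ⟨h1, h2, h3⟩ := balanced_of_eq_bprim (hui lam hl) (hu lam hl).2.2
    refine ⟨h1 _, fun x _ => ?_, fun c d hc hcd hd => ?_⟩
    · rw [havg]
      exact h2 x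
    · rw [hset _ hc hd, hrhs]
      exact h3 c d hcd
  · rw [(hu lam hl).2.2, bprim_self, add_zero]
  · obtain ⟨hlbv, hbal, hinc⟩ := hv
    have hbd : ∀ c d, s < c → c ≤ d → d < t → ∃ R, ∀ x ∈ Set.Icc c d, ‖v x‖ ≤ R :=
      fun c d hc hcd hd => exists_norm_le_of_locallyBoundedVariationOn hlbv
        ⟨hc, hcd.trans_lt hd⟩ ⟨hc.trans_le hcd, hd⟩ Set.ordConnected_Ioo
    have hvi : ∀ c d, s < c → d < t →
        IntegrableOn (fun y => (A₀ y + lam • B y) (v y) + g y) (Set.Icc c d) μ := by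
      intro c d hc hd
      rcases le_or_gt c d with hcd | hcd
      · obtain ⟨R', hR'⟩ := hbd c d hc hcd hd
        have hsub : Set.Icc c d ⊆ Set.Ioo s t := Set.Icc_subset_Ioo hc hd
        have hvm := aestronglyMeasurable_of_locallyBoundedVariationOn (S := Set.Icc c d)
          (fun p q hp hq => (hlbv p q (hsub hp) (hsub hq)).mono
            (Set.inter_subset_inter_left _ hsub)) measurableSet_Icc μ
        exact (integrable_clm_apply (hAi lam).restrict hvm
          ((ae_restrict_iff' measurableSet_Icc).2 (Eventually.of_forall hR'))).add hgi.restrict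
      · rw [Set.Icc_eq_empty hcd.not_ge]
        exact integrableOn_empty
    have hveq : ∀ y ∈ Set.Ioo s t, v y = u0 + bprim μ x0
        (fun y => (A₀ y + lam • B y) (v y) + g y) y := by
      intro y hy
      rw [← hv0]
      refine eq_bprim_of_balanced (fun x hx => ⟨(hbal x hx).2.1, ?_⟩) hvi
        (fun c d hc hcd hd => ?_) hx0 hy
      · rw [← havg]
        exact (hbal x hx).2.2
      · rw [hinc c d hc hcd hd, hset _ hc hd, hrhs]
    have hsub : Set.uIcc x0 x ⊆ Set.Ioo s t := Set.ordConnected_Ioo.uIcc_subset hx0 hx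
    obtain ⟨R', hR'⟩ := hbd _ _ (lt_min hx0.1 hx.1) inf_le_sup (max_lt hx0.2 hx.2)
    exact eqOn_of_eq_bprim (hAi lam) (hD lam hl) Set.left_mem_uIcc Set.ordConnected_uIcc
      (fun x _ => (hu lam hl).2.1 x) hR' (hui lam hl).integrableOn
      (hvi _ _ (lt_min hx0.1 hx.1) (max_lt hx0.2 hx.2)) (fun x _ => (hu lam hl).2.2 x)
      (fun y hy => hveq y (hsub hy)) Set.right_mem_uIcc
  · exact (differentiableAt_solution hA₀i hBi hgi (hopen.mem_nhds hl) (hD lam hl)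
      (fun lam hl => (hu lam hl).1) (fun lam hl => (hu lam hl).2.1)
      (fun lam hl => (hu lam hl).2.2) x).differentiableWithinAt
end

section
/- Constancy of the Wronskian: let λ ∈ ℂ and assume that the matrices 2J ± ν({x})·(λ𝒲(x) − 𝒬(x)) and 2J ± ν({x})·(λ̄𝒲(x) − 𝒬(x)) are invertible for every x ∈ (a,b). If u is a balanced solution of Ju' + qu = λ̄wu and v is a balanced solution of Jv' + qv = λwv on (a,b), then the function x ↦ u⁻(x)*·J·v⁻(x) is constant on (a,b), and moreover u⁺(x)*·J·v⁺(x) = u⁻(x)*·J·v⁻(x) for every x ∈ (a,b). -/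
/-!
The form `u⁻* J v⁻` is differentiated by an integration-by-parts formula that is exact in the
presence of atoms. If `A`, `B` are the left-continuous primitives of `f dν`, `g dν`, then splitting
the square `[c,d)²` along its diagonal, with the diagonal shared equally between the two halves,
gives by Fubini
`A(d) B(d) - A(c) B(c) = ∫_{[c,d)} (f B̃ + Ã g) dν`,
where `Ã(t) = A(t) + ν{t} f(t) / 2` is the balanced value, and likewise for `B̃`
(`balanced_product_rule`). Balanced solutions have exactly these values at their jumps, since
`u⁺(t) - u⁻(t) = ν{t} F(t)` for the density `F = J⁻¹(λ̄𝒲 - 𝒬)u` (`solution_components`).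

With `G = J⁻¹(λ𝒲 - 𝒬)v`, the increment of `u⁻* J v⁻` is therefore the integral of
`F* J v + u* J G`. This integrand vanishes identically because `J* = -J` and
`(λ̄𝒲 - 𝒬)* = λ𝒲 - 𝒬`. Across a single point the form jumps by `ν{t}` times the same integrand, so
the left and right values agree.
-/

open MeasureTheory Filter Function Matrix
open scoped ComplexOrder

/-- Product rule for balanced primitives. The functions `pl`, `ql` are the left-continuous
primitives of `f dν`, `g dν`, and `p`, `q` their balanced versions, which carry half of the atom at
each point. -/
theorem balanced_product_rule {ν : Measure ℝ} {c d : ℝ} (hcd : c ≤ d)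
    (hfin : ν (Set.Ico c d) < ⊤) {f g p q pl ql : ℝ → ℂ}
    (hf : IntegrableOn f (Set.Ico c d) ν) (hg : IntegrableOn g (Set.Ico c d) ν)
    (hpl : ∀ t ∈ Set.Icc c d, pl t - pl c = ∫ s in Set.Ico c t, f s ∂ν)
    (hql : ∀ t ∈ Set.Icc c d, ql t - ql c = ∫ s in Set.Ico c t, g s ∂ν)
    (hp : ∀ t ∈ Set.Ico c d, p t = pl t + (ν {t}).toReal / 2 * f t)
    (hq : ∀ t ∈ Set.Ico c d, q t = ql t + (ν {t}).toReal / 2 * g t) :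
    IntegrableOn (fun t => f t * q t + p t * g t) (Set.Ico c d) ν ∧
      pl d * ql d - pl c * ql c = ∫ t in Set.Ico c d, (f t * q t + p t * g t) ∂ν := by
  set μ : Measure ℝ := ν.restrict (Set.Ico c d) with hμ
  have : IsFiniteMeasure μ := ⟨by simpa [hμ] using hfin⟩
  -- `K` is the indicator of `s < t`, with value `1/2` on the diagonal, so `K (s,t) + K (t,s) = 1`.
  set K : ℝ × ℝ → ℂ := fun z => ({z : ℝ × ℝ | z.1 < z.2}.indicator (fun _ => (1 : ℂ)) z)
    + ({z : ℝ × ℝ | z.1 = z.2}.indicator (fun _ => (1 / 2 : ℂ)) z) with hK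
  have hKm : Measurable K :=
    (measurable_const.indicator (measurableSet_lt measurable_fst measurable_snd)).add
      (measurable_const.indicator (measurableSet_eq_fun measurable_fst measurable_snd))
  have hK1 : ∀ s t, K (s, t) + K (t, s) = 1 := by
    intro s t
    rcases lt_trichotomy s t with h | h | h
    · simp [hK, Set.indicator, h, h.ne, h.ne', h.not_gt]
    · subst h; simp [hK, Set.indicator]; norm_num
    · simp [hK, Set.indicator, h, h.ne, h.ne', h.not_gt]
  have hKb : ∀ z, ‖K z‖ ≤ 1 := by
    rintro ⟨s, t⟩
    rcases lt_trichotomy s t with h | h | h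
    · simp [hK, Set.indicator, h, h.ne]
    · subst h; simp [hK, Set.indicator]; norm_num
    · simp [hK, Set.indicator, h.ne', h.not_gt]
  -- Integrating against `K (·, t)` produces the balanced primitive at `t`.
  have hint : ∀ (h : ℝ → ℂ), IntegrableOn h (Set.Ico c d) ν → ∀ t ∈ Set.Ico c d,
      ∫ s, K (s, t) * h s ∂μ
        = (∫ s in Set.Ico c t, h s ∂ν) + (ν {t}).toReal / 2 * h t := by
    intro h hh t ht
    have e : (fun s => K (s, t) * h s) = fun s => (Set.Iio t).indicator h s
        + (1 / 2 : ℂ) * ({t} : Set ℝ).indicator h s := by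
      funext s
      rcases lt_trichotomy s t with h | h | h
      · simp [hK, Set.indicator, h, h.ne]
      · subst h; simp [hK, Set.indicator]
      · simp [hK, Set.indicator, h.ne', h.not_gt]
    rw [e, integral_add (Integrable.indicator hh measurableSet_Iio)
      ((Integrable.indicator hh (measurableSet_singleton t)).const_mul _), integral_const_mul,
      integral_indicator measurableSet_Iio, integral_indicator (measurableSet_singleton t),
      Measure.restrict_restrict measurableSet_Iio,
      Measure.restrict_restrict (measurableSet_singleton t)]
    have e1 : Set.Iio t ∩ Set.Ico c d = Set.Ico c t := by
      ext s; simp only [Set.mem_inter_iff, Set.mem_Iio, Set.mem_Ico]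
      constructor
      · rintro ⟨h1, h2, -⟩; exact ⟨h2, h1⟩
      · rintro ⟨h1, h2⟩; exact ⟨h2, h1, h2.trans ht.2⟩
    have e2 : {t} ∩ Set.Ico c d = {t} := by simpa using ht
    rw [e1, e2, integral_singleton, Measure.real, Complex.real_smul]
    ring
  have hF : Integrable (fun z : ℝ × ℝ => f z.1 * g z.2) (μ.prod μ) := hf.mul_prod hg
  have hF1 : Integrable (fun z : ℝ × ℝ => K z * (f z.1 * g z.2)) (μ.prod μ) :=
    hF.bdd_mul hKm.aestronglyMeasurable (Eventually.of_forall hKb)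
  have hF2 : Integrable (fun z : ℝ × ℝ => K z.swap * (f z.1 * g z.2)) (μ.prod μ) :=
    hF.bdd_mul (hKm.comp measurable_swap).aestronglyMeasurable
      (Eventually.of_forall fun z => hKb _)
  have a1 : ∀ t ∈ Set.Ico c d, ∫ s, K (s, t) * (f s * g t) ∂μ = (p t - pl c) * g t := by
    intro t ht
    have : (fun s => K (s, t) * (f s * g t)) = fun s => (K (s, t) * f s) * g t := by
      funext s; ring
    rw [this, integral_mul_const, hint f hf t ht, hp t ht, ← hpl t ⟨ht.1, ht.2.le⟩]
    ring
  have a2 : ∀ t ∈ Set.Ico c d, ∫ s, K (s, t) * (f t * g s) ∂μ = f t * (q t - ql c) := by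
    intro t ht
    have : (fun s => K (s, t) * (f t * g s)) = fun s => f t * (K (s, t) * g s) := by
      funext s; ring
    rw [this, integral_const_mul, hint g hg t ht, hq t ht, ← hql t ⟨ht.1, ht.2.le⟩]
    ring
  have ha1 : (fun t => ∫ s, K (s, t) * (f s * g t) ∂μ) =ᵐ[μ] fun t => (p t - pl c) * g t :=
    (ae_restrict_iff' measurableSet_Ico).2 (Eventually.of_forall a1)
  have ha2 : (fun t => ∫ s, K (s, t) * (f t * g s) ∂μ) =ᵐ[μ] fun t => f t * (q t - ql c) :=
    (ae_restrict_iff' measurableSet_Ico).2 (Eventually.of_forall a2)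
  have i1 : Integrable (fun t => (p t - pl c) * g t) μ := hF1.integral_prod_right.congr ha1
  have i2 : Integrable (fun t => f t * (q t - ql c)) μ := hF2.integral_prod_left.congr ha2
  have key : (∫ t, f t ∂μ) * ∫ t, g t ∂μ
      = (∫ t, (p t - pl c) * g t ∂μ) + ∫ t, f t * (q t - ql c) ∂μ := by
    rw [← integral_congr_ae ha1, ← integral_congr_ae ha2, ← integral_prod_mul,
      ← integral_prod_symm _ hF1]
    have := integral_prod _ hF2
    simp only [Prod.swap_prod_mk] at this
    rw [← this, ← integral_add hF1 hF2]
    refine integral_congr_ae (Eventually.of_forall fun z => ?_)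
    have := hK1 z.1 z.2
    change f z.1 * g z.2 = K (z.1, z.2) * _ + K (z.2, z.1) * _
    linear_combination (-(f z.1 * g z.2)) * this
  have e : (fun t => f t * q t + p t * g t) = fun t =>
      ((p t - pl c) * g t + f t * (q t - ql c)) + (pl c * g t + ql c * f t) := by
    funext t; ring
  have i3 : Integrable (fun t => pl c * g t) μ := hg.const_mul _
  have i4 : Integrable (fun t => ql c * f t) μ := hf.const_mul _
  rw [e]
  refine ⟨(i1.add i2).add (i3.add i4), ?_⟩
  have split : ∫ t, ((p t - pl c) * g t + f t * (q t - ql c)) + (pl c * g t + ql c * f t) ∂μ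
      = (∫ t, (p t - pl c) * g t + f t * (q t - ql c) ∂μ) + ∫ t, pl c * g t + ql c * f t ∂μ :=
    integral_add (i1.add i2) (i3.add i4)
  rw [split, integral_add i1 i2, ← key, integral_add i3 i4,
    integral_const_mul, integral_const_mul, ← hpl d ⟨hcd, le_rfl⟩, ← hql d ⟨hcd, le_rfl⟩]
  ring

/-- On compact subintervals, the components of a vector function of locally bounded variation are
bounded and measurable for every measure: real and imaginary parts are differences of monotone
functions. -/
theorem lbv_component {n : ℕ} {a b c d : ℝ} {u : ℝ → Fin n → ℂ} (ν : Measure ℝ)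
    (hu : LocallyBoundedVariationOn u (Set.Ioo a b)) (hc : a < c) (hd : d < b) (i : Fin n) :
    AEStronglyMeasurable (fun t => u t i) (ν.restrict (Set.Icc c d)) ∧
      ∃ C, ∀ t ∈ Set.Icc c d, ‖u t i‖ ≤ C := by
  rcases lt_or_ge d c with h | h
  · simp [Set.Icc_eq_empty h.not_ge]
  have hcm : c ∈ Set.Ioo a b := ⟨hc, h.trans_lt hd⟩
  have hdm : d ∈ Set.Ioo a b := ⟨hc.trans_le h, hd⟩
  have hsub : Set.Icc c d ⊆ Set.Ioo a b := fun t ht => ⟨hc.trans_le ht.1, ht.2.trans_lt hd⟩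
  have hreal : ∀ (φ : (Fin n → ℂ) → ℝ), LipschitzWith 1 φ →
      AEMeasurable (fun t => φ (u t)) (ν.restrict (Set.Icc c d)) := by
    intro φ hφ
    obtain ⟨p, q, hp, hq, e⟩ :=
      (hφ.comp_locallyBoundedVariationOn hu).exists_monotoneOn_sub_monotoneOn
    have e' : (fun t => φ (u t)) = p - q := e
    rw [e']
    exact (aemeasurable_restrict_of_monotoneOn measurableSet_Icc (hp.mono hsub)).sub
      (aemeasurable_restrict_of_monotoneOn measurableSet_Icc (hq.mono hsub))
  constructor
  · have hre := hreal (fun z => (z i).re) (LipschitzWith.of_dist_le_mul fun x y => by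
      rw [Real.dist_eq, ← Complex.sub_re, NNReal.coe_one, one_mul]
      refine (Complex.abs_re_le_norm _).trans ?_
      rw [← dist_eq_norm]; exact dist_le_pi_dist x y i)
    have him := hreal (fun z => (z i).im) (LipschitzWith.of_dist_le_mul fun x y => by
      rw [Real.dist_eq, ← Complex.sub_im, NNReal.coe_one, one_mul]
      refine (Complex.abs_im_le_norm _).trans ?_
      rw [← dist_eq_norm]; exact dist_le_pi_dist x y i)
    have : (fun t => u t i) = fun t => ((u t i).re : ℂ) + ((u t i).im : ℂ) * Complex.I := by
      funext t; simp
    rw [this]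
    exact ((Complex.measurable_ofReal.comp_aemeasurable hre).add
      ((Complex.measurable_ofReal.comp_aemeasurable him).mul_const _)).aestronglyMeasurable
  · have hbv := hu c d hcm hdm
    refine ⟨(eVariationOn u (Set.Ioo a b ∩ Set.Icc c d)).toReal + ‖u c‖, fun t ht => ?_⟩
    have h1 : dist (u t) (u c) ≤ _ :=
      BoundedVariationOn.dist_le hbv ⟨hsub ht, ht⟩ ⟨hcm, le_rfl, h⟩
    have h2 : ‖u t‖ ≤ ‖u t - u c‖ + ‖u c‖ := by
      simpa using norm_add_le (u t - u c) (u c)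
    rw [dist_eq_norm] at h1
    exact (norm_le_pi_norm (u t) i).trans (h2.trans (by gcongr))

/-- Componentwise form of the homogeneous equation: the density `J⁻¹ (λ𝒲 - 𝒬) u` is locally
integrable with primitive `u⁻`, the jump of `u` at `t` is the mass that the density puts on `{t}`,
and `u t` is `u⁻` plus half of that jump. -/
theorem solution_components {a b : ℝ} {n : ℕ} {ν : Measure ℝ}
    {J : Matrix (Fin n) (Fin n) ℂ} {Q W : ℝ → Matrix (Fin n) (Fin n) ℂ}
    (hQ : ∀ (i j : Fin n) (c d : ℝ), a < c → d < b →
      IntegrableOn (fun x => Q x i j) (Set.Icc c d) ν)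
    (hW : ∀ (i j : Fin n) (c d : ℝ), a < c → d < b →
      IntegrableOn (fun x => W x i j) (Set.Icc c d) ν)
    {lam : ℂ} {u F : ℝ → Fin n → ℂ}
    (hu : IsBalancedSolutionH a b ν J Q W lam (fun _ => 0) u)
    (hF : F = fun t => J⁻¹ *ᵥ ((lam • W t - Q t) *ᵥ u t)) :
    (∀ c d, a < c → d < b → ∀ i, IntegrableOn (fun t => F t i) (Set.Icc c d) ν) ∧
    (∀ c d, a < c → c ≤ d → d < b → ∀ i,
      leftLim u d i - leftLim u c i = ∫ t in Set.Ico c d, F t i ∂ν) ∧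
    ∀ t ∈ Set.Ioo a b, rightLim u t = leftLim u t + (ν {t}).toReal • F t ∧
      ∀ i, u t i = leftLim u t i + (ν {t}).toReal / 2 * F t i := by
  obtain ⟨hbv, hbal, heq⟩ := hu
  have hint : ∀ c d, a < c → d < b → ∀ i, IntegrableOn (fun t => F t i) (Set.Icc c d) ν := by
    intro c d hc hd i
    simp only [hF, Matrix.mulVec, dotProduct]
    refine integrable_finsetSum _ fun j _ => Integrable.const_mul ?_ _
    refine integrable_finsetSum _ fun k _ => ?_
    obtain ⟨hm, C, hC⟩ := lbv_component ν hbv hc hd k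
    exact (((hW j k c d hc hd).const_mul lam).sub (hQ j k c d hc hd)).mul_bdd hm
      ((ae_restrict_iff' measurableSet_Icc).2 (Eventually.of_forall hC))
  have hlim : ∀ c d, a < c → c ≤ d → d < b → ∀ i,
      leftLim u d i - leftLim u c i = ∫ t in Set.Ico c d, F t i ∂ν := by
    intro c d hc hcd hd i
    have h := heq c d hc hcd hd
    simp only [Matrix.mulVec_zero, add_zero] at h
    have h' := congrFun h i
    rw [Pi.sub_apply] at h'
    rw [h', hF, eval_integral]
    intro j
    have := (hint c d hc hd j).mono_set Set.Ico_subset_Icc_self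
    rw [hF] at this
    exact this
  have hjump : ∀ t ∈ Set.Ioo a b, rightLim u t = leftLim u t + (ν {t}).toReal • F t := by
    intro t ht
    obtain ⟨m, htm, hmb⟩ := exists_between ht.2
    rw [← rightLim_leftLim (hbal t ht).2.1]
    apply rightLim_eq_of_tendsto
    rw [tendsto_pi_nhds]
    intro i
    have hl : Tendsto (fun d => ∫ s in Set.Icc t m, (Set.Ico t d).indicator (fun s => F s i) s ∂ν)
        (nhdsWithin t (Set.Ioi t))
        (nhds (∫ s in Set.Icc t m, ({t} : Set ℝ).indicator (fun s => F s i) s ∂ν)) := by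
      have hi := hint t m ht.1 hmb i
      refine tendsto_integral_filter_of_dominated_convergence (fun s => ‖F s i‖) ?_ ?_ hi.norm ?_
      · exact Eventually.of_forall fun d =>
          (Integrable.indicator hi measurableSet_Ico).aestronglyMeasurable
      · exact Eventually.of_forall fun d => Eventually.of_forall fun s =>
          norm_indicator_le_norm_self _ _
      · refine (ae_restrict_iff' measurableSet_Icc).2 (Eventually.of_forall fun s hs => ?_)
        apply tendsto_const_nhds.congr'
        rcases hs.1.eq_or_lt with h | h
        · subst h
          filter_upwards [self_mem_nhdsWithin] with d hd
          have hd' : t < d := hd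
          simp [Set.indicator, hd']
        · filter_upwards [Ioo_mem_nhdsGT h] with d hd
          simp [Set.indicator, h.ne', hd.2.not_gt]
    rw [integral_indicator (measurableSet_singleton t),
      Measure.restrict_restrict (measurableSet_singleton t),
      show {t} ∩ Set.Icc t m = {t} by simpa using htm.le, integral_singleton, Measure.real] at hl
    refine (hl.const_add (leftLim u t i)).congr' ?_
    filter_upwards [Ioo_mem_nhdsGT htm] with d hd
    rw [integral_indicator measurableSet_Ico, Measure.restrict_restrict measurableSet_Ico,
      Set.inter_eq_left.2 (show Set.Ico t d ⊆ Set.Icc t m from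
        fun s hs => ⟨hs.1, hs.2.le.trans hd.2.le⟩),
      ← hlim t d ht.1 hd.1.le (hd.2.trans hmb) i]
    ring
  refine ⟨hint, hlim, fun t ht => ⟨hjump t ht, fun i => ?_⟩⟩
  have h := congrFun (hbal t ht).2.2 i
  rw [h, hjump t ht]
  simp only [Pi.div_apply, Pi.add_apply, Pi.smul_apply, Complex.real_smul, Pi.ofNat_apply]
  ring

/-- **Constancy of the Wronskian.**  Assume the jump matrices
`2J ± ν({x})·(λ𝒲(x) − 𝒬(x))` and `2J ± ν({x})·(λ̄𝒲(x) − 𝒬(x))` are invertible on `(a,b)`.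
If `u` solves `Ju' + qu = λ̄wu` and `v` solves `Jv' + qv = λwv` (balanced solutions), then
`x ↦ u⁻(x)*·J·v⁻(x)` is constant on `(a,b)` and `u⁺(x)*·J·v⁺(x) = u⁻(x)*·J·v⁻(x)`. -/
theorem stmt_7 (a b : ℝ) (n : ℕ) (ν : Measure ℝ)
    (hν : ∀ c d : ℝ, a < c → d < b → ν (Set.Icc c d) < ⊤)
    (J : Matrix (Fin n) (Fin n) ℂ) (hJinv : IsUnit J) (hJ : Jᴴ = -J)
    (Q W : ℝ → Matrix (Fin n) (Fin n) ℂ)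
    (hQher : ∀ x : ℝ, (Q x).IsHermitian)
    (hWpos : ∀ x : ℝ, (W x).PosSemidef)
    (hQ : ∀ (i j : Fin n) (c d : ℝ), a < c → d < b →
      IntegrableOn (fun x => Q x i j) (Set.Icc c d) ν)
    (hW : ∀ (i j : Fin n) (c d : ℝ), a < c → d < b →
      IntegrableOn (fun x => W x i j) (Set.Icc c d) ν)
    (lam : ℂ)
    (hjump : ∀ x ∈ Set.Ioo a b,
      (IsUnit ((2 : ℂ) • J + (ν {x}).toReal • (lam • W x - Q x)) ∧
       IsUnit ((2 : ℂ) • J - (ν {x}).toReal • (lam • W x - Q x))) ∧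
      (IsUnit ((2 : ℂ) • J + (ν {x}).toReal • ((starRingEnd ℂ lam) • W x - Q x)) ∧
       IsUnit ((2 : ℂ) • J - (ν {x}).toReal • ((starRingEnd ℂ lam) • W x - Q x))))
    (u v : ℝ → Fin n → ℂ)
    (hu : IsBalancedSolutionH a b ν J Q W (starRingEnd ℂ lam) (fun _ => 0) u)
    (hv : IsBalancedSolutionH a b ν J Q W lam (fun _ => 0) v) :
    (∀ x ∈ Set.Ioo a b, ∀ y ∈ Set.Ioo a b,
      star (leftLim u x) ⬝ᵥ J.mulVec (leftLim v x)
        = star (leftLim u y) ⬝ᵥ J.mulVec (leftLim v y)) ∧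
    ∀ x ∈ Set.Ioo a b,
      star (rightLim u x) ⬝ᵥ J.mulVec (rightLim v x)
        = star (leftLim u x) ⬝ᵥ J.mulVec (leftLim v x) := by
  set F : ℝ → Fin n → ℂ :=
    fun t => J⁻¹ *ᵥ (((starRingEnd ℂ lam) • W t - Q t) *ᵥ u t) with hF
  set G : ℝ → Fin n → ℂ := fun t => J⁻¹ *ᵥ ((lam • W t - Q t) *ᵥ v t) with hG
  obtain ⟨uint, ulim, ujump⟩ := solution_components hQ hW hu hF
  obtain ⟨vint, vlim, vjump⟩ := solution_components hQ hW hv hG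
  have hJJ : J * J⁻¹ = 1 := Matrix.mul_nonsing_inv J ((Matrix.isUnit_iff_isUnit_det J).1 hJinv)
  -- The pointwise cancellation: `λ̄𝒲 - 𝒬` is the adjoint of `λ𝒲 - 𝒬`, and `J* = -J`.
  have hcancel : ∀ t, star (F t) ⬝ᵥ (J *ᵥ v t) + star (u t) ⬝ᵥ (J *ᵥ G t) = 0 := by
    intro t
    have hJF : J *ᵥ F t = ((starRingEnd ℂ lam) • W t - Q t) *ᵥ u t := by
      simp [hF, Matrix.mulVec_mulVec, hJJ, ← Matrix.mul_assoc]
    have hJG : J *ᵥ G t = (lam • W t - Q t) *ᵥ v t := by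
      simp [hG, Matrix.mulVec_mulVec, hJJ, ← Matrix.mul_assoc]
    have hadj : ((starRingEnd ℂ lam) • W t - Q t)ᴴ = lam • W t - Q t := by
      rw [Matrix.conjTranspose_sub, Matrix.conjTranspose_smul, (hQher t).eq,
        (hWpos t).isHermitian.eq]
      simp
    have h1 : star (F t) ⬝ᵥ (J *ᵥ v t) = - (star (J *ᵥ F t) ⬝ᵥ v t) := by
      rw [Matrix.star_mulVec J, hJ, Matrix.vecMul_neg, neg_dotProduct, neg_neg,
        Matrix.dotProduct_mulVec]
    rw [h1, hJF, hJG, Matrix.star_mulVec, hadj, Matrix.dotProduct_mulVec]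
    exact neg_add_cancel _
  have hstar : ∀ t i, u t i = leftLim u t i + (ν {t}).toReal / 2 * F t i →
      star (u t i) = star (leftLim u t i) + (ν {t}).toReal / 2 * star (F t i) := by
    intro t i h
    rw [h]; simp
  have hvJ : ∀ t ∈ Set.Ioo a b, ∀ i, (J *ᵥ v t) i
      = (J *ᵥ leftLim v t) i + (ν {t}).toReal / 2 * (J *ᵥ G t) i := by
    intro t ht i
    have : v t = leftLim v t + ((ν {t}).toReal / 2 : ℂ) • G t := by
      funext j; simpa using (vjump t ht).2 j
    conv_lhs => rw [this]
    simp [Matrix.mulVec_add, Matrix.mulVec_smul]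
  have hconst : ∀ c d, a < c → c ≤ d → d < b →
      star (leftLim u d) ⬝ᵥ J.mulVec (leftLim v d)
        = star (leftLim u c) ⬝ᵥ J.mulVec (leftLim v c) := by
    intro c d hc hcd hd
    have hsub : Set.Ico c d ⊆ Set.Icc c d := Set.Ico_subset_Icc_self
    have hin : ∀ t ∈ Set.Icc c d, t ∈ Set.Ioo a b :=
      fun t ht => ⟨hc.trans_le ht.1, ht.2.trans_lt hd⟩
    have hJGint : ∀ d', d' < b → ∀ i, IntegrableOn (fun t => (J *ᵥ G t) i) (Set.Icc c d') ν := by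
      intro d' hd' i
      simp only [Matrix.mulVec, dotProduct]
      exact integrable_finsetSum _ fun j _ => (vint c d' hc hd' j).const_mul _
    have hprod := fun i : Fin n => balanced_product_rule (ν := ν) (c := c) (d := d) hcd
      ((measure_mono hsub).trans_lt (hν c d hc hd))
      (f := fun t => star (F t i)) (g := fun t => (J *ᵥ G t) i)
      (p := fun t => star (u t i)) (q := fun t => (J *ᵥ v t) i)
      (pl := fun t => star (leftLim u t i)) (ql := fun t => (J *ᵥ leftLim v t) i)
      (Complex.conjLIE.toLinearIsometry.toContinuousLinearMap.integrable_comp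
        ((uint c d hc hd i).mono_set hsub))
      ((hJGint d hd i).mono_set hsub)
      (fun t ht => by
        have := ulim c t hc ht.1 (ht.2.trans_lt hd) i
        change star _ - star _ = ∫ s in Set.Ico c t, (starRingEnd ℂ) (F s i) ∂ν
        rw [integral_conj, ← this, ← star_sub]
        rfl)
      (fun t ht => by
        have h : ∀ j, leftLim v t j - leftLim v c j = ∫ s in Set.Ico c t, G s j ∂ν :=
          vlim c t hc ht.1 (ht.2.trans_lt hd)
        simp only [Matrix.mulVec, dotProduct]
        rw [integral_finsetSum _ fun j _ => ((vint c t hc (ht.2.trans_lt hd) j).mono_set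
          Set.Ico_subset_Icc_self).const_mul _, ← Finset.sum_sub_distrib]
        refine Finset.sum_congr rfl fun j _ => ?_
        rw [integral_const_mul, ← h j]
        ring)
      (fun t ht => hstar t i ((ujump t (hin t (hsub ht))).2 i))
      (fun t ht => hvJ t (hin t (hsub ht)) i)
    have hsum : star (leftLim u d) ⬝ᵥ J.mulVec (leftLim v d)
        - star (leftLim u c) ⬝ᵥ J.mulVec (leftLim v c)
        = ∑ i, ∫ t in Set.Ico c d,
            (star (F t i) * (J *ᵥ v t) i + star (u t i) * (J *ᵥ G t) i) ∂ν := by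
      rw [dotProduct, dotProduct, ← Finset.sum_sub_distrib]
      exact Finset.sum_congr rfl fun i _ => (hprod i).2
    rw [← integral_finsetSum _ fun i _ => (hprod i).1] at hsum
    rw [← sub_eq_zero, hsum]
    refine (integral_congr_ae (Eventually.of_forall fun t => ?_)).trans (integral_zero _ _)
    simpa [dotProduct, Finset.sum_add_distrib] using hcancel t
  refine ⟨fun x hx y hy => ?_, fun x hx => ?_⟩
  · rcases le_total x y with h | h
    · exact (hconst x y hx.1 h hy.2).symm
    · exact hconst y x hy.1 h hx.2
  · -- The jump of the form is the atom times the integrand evaluated at the balanced values.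
    have hu' : u x = leftLim u x + ((ν {x}).toReal / 2 : ℂ) • F x := by
      funext j; simpa using (ujump x hx).2 j
    have hv' : v x = leftLim v x + ((ν {x}).toReal / 2 : ℂ) • G x := by
      funext j; simpa using (vjump x hx).2 j
    have h := hcancel x
    rw [hu', hv'] at h
    rw [(ujump x hx).1, (vjump x hx).1]
    have hr : ∀ z : Fin n → ℂ, (ν {x}).toReal • z = ((ν {x}).toReal : ℂ) • z := by
      intro z; funext j; simp
    rw [hr, hr]
    simp only [star_add, star_smul, Matrix.mulVec_add, Matrix.mulVec_smul, add_dotProduct,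
      dotProduct_add, smul_dotProduct, dotProduct_smul, smul_eq_mul, star_div₀, Complex.star_def,
      Complex.conj_ofReal, Complex.conj_ofNat] at h ⊢
    linear_combination ((ν {x}).toReal : ℂ) * h
end

section
/- Variation of constants for the Hamiltonian system: let λ ∈ ℂ and assume 2J ± ν({x})·(λ𝒲(x) − 𝒬(x)) and 2J ± ν({x})·(λ̄𝒲(x) − 𝒬(x)) are invertible for every x ∈ (a,b). Fix x0 ∈ (a,b) with ν({x0}) = 0, and let U(·,λ) and U(·,λ̄) be the fundamental matrices (balanced matrix functions of locally bounded variation whose columns are balanced solutions) of Ju' + qu = λwu and Ju' + qu = λ̄wu respectively, normalized by U(x0,λ) = U(x0,λ̄) = I. If f : (a,b) → ℂⁿ has 𝒲f locally ν-integrable and u is the balanced solution of Ju' + qu = λwu + wf with u(x0) = 0, then for all x ∈ (a,b) with x ≥ x0: u⁻(x) = U⁻(x,λ)·J⁻¹·∫_{[x0,x)} U(t,λ̄)*·𝒲(t)·f(t) dν(t). -/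
/-!
The proof is the classical one by Lagrange's identity.  Let `u` solve `Ju' + qu = λwu + wf` and let
`v` solve `Jv' + qv = λ̄wv`.  The product rule for the measure `d(v* J u)` gives
`v* J du + dv* J u`, in which the terms containing `λ𝒲 − 𝒬` cancel because `𝒬`, `𝒲` are Hermitian
and `J* = −J`; what is left is `v* 𝒲 f dν` (`lagrange_identity`).

* The columns of `U(·,λ)` (with `f = 0`) and of `U(·,λ̄)`, both equal to `I` at `x0`, give
  `U⁻(x,λ̄)* J U⁻(x,λ) = J`.
* The solution `u` with `u(x0) = 0` gives
  `U⁻(x,λ̄)* J u⁻(x) = ∫_{[x0,x)} U(t,λ̄)* 𝒲 f dν`.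

By the first identity `U⁻(x,λ) J⁻¹` is the inverse of `U⁻(x,λ̄)* J`, and applying it to the second
one yields the formula.  Since `ν({x0}) = 0`, the left limits at `x0` are the values there
(`leftLim_sol_eq_self`).

The analytic ingredient is the product rule without correction term (`balanced_product_rule`).  A
balanced solution is `t ↦ A + ∫ k(s,t) φ(s) dν(s)`, where `φ` is its density and `k` is the mean of
the indicators of `s < t` and `s ≤ t` (`sol_eq`).  As `k(s,t) + k(t,s) = 1`, Fubini's theorem turns
the sum of the two cross terms into the product of the integrals.  Densities are integrable since
functions of locally bounded variation are measurable and locally bounded.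
-/

open MeasureTheory Filter Function Matrix
open scoped ComplexOrder

/-- The left-limit matrix `U⁻(x)`, formed columnwise. -/
noncomputable def matLeftLim {n : ℕ} (U : ℝ → Matrix (Fin n) (Fin n) ℂ) (x : ℝ) :
    Matrix (Fin n) (Fin n) ℂ :=
  Matrix.of fun i j => leftLim (fun t => U t i j) x

/-! ### Functions of locally bounded variation as multipliers -/

lemma bv_re_im {u : ℝ → ℂ} {s : Set ℝ} (h : LocallyBoundedVariationOn u s) :
    LocallyBoundedVariationOn (fun t => (u t).re) s ∧
      LocallyBoundedVariationOn (fun t => (u t).im) s :=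
  ⟨(Complex.reCLM.lipschitz).comp_locallyBoundedVariationOn h,
    (Complex.imCLM.lipschitz).comp_locallyBoundedVariationOn h⟩

lemma bv_aemeasurable_real {u : ℝ → ℝ} {s : Set ℝ} (hs : MeasurableSet s)
    (h : LocallyBoundedVariationOn u s) (ν : Measure ℝ) :
    AEMeasurable u (ν.restrict s) := by
  obtain ⟨p, q, hp, hq, rfl⟩ := h.exists_monotoneOn_sub_monotoneOn
  exact (aemeasurable_restrict_of_monotoneOn hs hp).sub
    (aemeasurable_restrict_of_monotoneOn hs hq)

lemma bv_aestronglyMeasurable {u : ℝ → ℂ} {s : Set ℝ} (hs : MeasurableSet s)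
    (h : LocallyBoundedVariationOn u s) (ν : Measure ℝ) :
    AEStronglyMeasurable u (ν.restrict s) := by
  have h1 := bv_aemeasurable_real hs (bv_re_im h).1 ν
  have h2 := bv_aemeasurable_real hs (bv_re_im h).2 ν
  have h3 := (Complex.measurable_ofReal.comp_aemeasurable h1).add
    ((Complex.measurable_ofReal.comp_aemeasurable h2).mul_const Complex.I)
  refine h3.aestronglyMeasurable.congr (Eventually.of_forall fun t => ?_)
  simp [Complex.re_add_im]

lemma bv_bounded {u : ℝ → ℂ} {s : Set ℝ} (h : LocallyBoundedVariationOn u s)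
    {c d : ℝ} (hc : c ∈ s) (hd : d ∈ s) :
    ∃ C : ℝ, ∀ t ∈ s ∩ Set.Icc c d, ‖u t‖ ≤ C := by
  by_cases hcd : c ≤ d
  · have hb : BoundedVariationOn u (s ∩ Set.Icc c d) := h c d hc hd
    refine ⟨‖u c‖ + (eVariationOn u (s ∩ Set.Icc c d)).toReal, fun t ht => ?_⟩
    have h1 := hb.dist_le ht ⟨hc, Set.left_mem_Icc.2 hcd⟩
    rw [dist_eq_norm] at h1
    have h2 : ‖u t‖ ≤ ‖u t - u c‖ + ‖u c‖ := by
      simpa using norm_add_le (u t - u c) (u c)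
    linarith
  · refine ⟨0, fun t ht => absurd (ht.2.1.trans ht.2.2) hcd⟩

/-- A function of locally bounded variation is a bounded measurable multiplier on compact
subintervals. -/
lemma bv_mul_integrableOn {u g : ℝ → ℂ} {a b c d : ℝ} {ν : Measure ℝ}
    (h : LocallyBoundedVariationOn u (Set.Ioo a b)) (hc : c ∈ Set.Ioo a b)
    (hd : d ∈ Set.Ioo a b) (hg : IntegrableOn g (Set.Icc c d) ν) :
    IntegrableOn (fun t => u t * g t) (Set.Icc c d) ν := by
  obtain ⟨C, hC⟩ := bv_bounded h hc hd
  have hsub : Set.Icc c d ⊆ Set.Ioo a b :=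
    fun t ht => ⟨hc.1.trans_le ht.1, ht.2.trans_lt hd.2⟩
  refine Integrable.bdd_mul (c := C) hg
    ((bv_aestronglyMeasurable measurableSet_Ioo h ν).mono_measure
      (Measure.restrict_mono hsub le_rfl)) ?_
  filter_upwards [ae_restrict_mem measurableSet_Icc] with t ht
  exact hC t ⟨hsub ht, ht⟩

/-! ### The product rule for balanced primitives -/

/-- `halfKernel s t` is the average of the indicators of `s < t` and `s ≤ t`.  Integrating a
density against it produces the balanced primitive. -/
noncomputable def halfKernel (s t : ℝ) : ℂ :=
  (Set.Iio t).indicator (fun _ => (1 / 2 : ℂ)) s + (Set.Iic t).indicator (fun _ => (1 / 2 : ℂ)) s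

lemma halfKernel_add_swap (s t : ℝ) : halfKernel s t + halfKernel t s = 1 := by
  rcases lt_trichotomy s t with h | h | h
  · simp [halfKernel, h, h.le, h.not_gt, h.not_ge]; norm_num
  · simp [halfKernel, h]; norm_num
  · simp [halfKernel, h, h.le, h.not_gt, h.not_ge]; norm_num

lemma norm_halfKernel_le (s t : ℝ) : ‖halfKernel s t‖ ≤ 1 := by
  rcases lt_trichotomy s t with h | h | h
  · simp [halfKernel, h, h.le]; norm_num
  · simp [halfKernel, h]; norm_num
  · simp [halfKernel, h.not_gt, h.not_ge]

lemma measurable_halfKernel : Measurable (fun p : ℝ × ℝ => halfKernel p.1 p.2) := by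
  have h1 : MeasurableSet {p : ℝ × ℝ | p.1 < p.2} := measurableSet_lt measurable_fst measurable_snd
  have h2 : MeasurableSet {p : ℝ × ℝ | p.1 ≤ p.2} := measurableSet_le measurable_fst measurable_snd
  exact ((measurable_const (a := (1 / 2 : ℂ))).indicator h1).add
    ((measurable_const (a := (1 / 2 : ℂ))).indicator h2)

lemma star_halfKernel (s t : ℝ) : star (halfKernel s t) = halfKernel s t := by
  by_cases h1 : s < t <;> by_cases h2 : s ≤ t <;> simp [halfKernel, h1, h2]

lemma integral_halfKernel_mul (μ : Measure ℝ) {φ : ℝ → ℂ} (hφ : Integrable φ μ) (t : ℝ) :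
    ∫ s, halfKernel s t * φ s ∂μ
      = ((∫ s in Set.Iio t, φ s ∂μ) + ∫ s in Set.Iic t, φ s ∂μ) / 2 := by
  have h1 : (fun s => halfKernel s t * φ s) = fun s =>
      (1 / 2 : ℂ) * ((Set.Iio t).indicator φ s + (Set.Iic t).indicator φ s) := by
    funext s
    by_cases h1 : s < t <;> by_cases h2 : s ≤ t <;> (simp [halfKernel, h1, h2]; try ring)
  rw [h1, integral_const_mul, integral_add (hφ.indicator measurableSet_Iio)
    (hφ.indicator measurableSet_Iic), integral_indicator measurableSet_Iio,
    integral_indicator measurableSet_Iic]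
  ring

/-- The product rule for balanced primitives: the jump terms contribute nothing, because each
factor is evaluated at the mean of its one-sided limits. -/
lemma balanced_product_rule_s8 (μ : Measure ℝ) [IsFiniteMeasure μ] {φ ψ : ℝ → ℂ}
    (hφ : Integrable φ μ) (hψ : Integrable ψ μ) (A B : ℂ) :
    Integrable (fun t => (A + ∫ s, halfKernel s t * φ s ∂μ) * ψ t
        + φ t * (B + ∫ s, halfKernel s t * ψ s ∂μ)) μ ∧
    (A + ∫ s, φ s ∂μ) * (B + ∫ s, ψ s ∂μ) - A * B
      = ∫ t, ((A + ∫ s, halfKernel s t * φ s ∂μ) * ψ t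
        + φ t * (B + ∫ s, halfKernel s t * ψ s ∂μ)) ∂μ := by
  have hprod : Integrable (fun p : ℝ × ℝ => φ p.1 * ψ p.2) (μ.prod μ) := hφ.mul_prod hψ
  have hk1 : Integrable (fun p : ℝ × ℝ => halfKernel p.1 p.2 * (φ p.1 * ψ p.2)) (μ.prod μ) :=
    hprod.bdd_mul (c := 1) measurable_halfKernel.aestronglyMeasurable
      (Eventually.of_forall fun p => norm_halfKernel_le _ _)
  have hk2 : Integrable (fun p : ℝ × ℝ => halfKernel p.2 p.1 * (φ p.1 * ψ p.2)) (μ.prod μ) :=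
    hprod.bdd_mul (c := 1) (measurable_halfKernel.comp measurable_swap).aestronglyMeasurable
      (Eventually.of_forall fun p => norm_halfKernel_le _ _)
  have e1 : ∀ t, ∫ s, halfKernel s t * (φ s * ψ t) ∂μ
      = (∫ s, halfKernel s t * φ s ∂μ) * ψ t := fun t => by
    rw [← integral_mul_const]; simp only [mul_assoc]
  have e2 : ∀ t, ∫ s, halfKernel s t * (φ t * ψ s) ∂μ
      = φ t * ∫ s, halfKernel s t * ψ s ∂μ := fun t => by
    rw [← integral_const_mul]
    exact integral_congr_ae (Eventually.of_forall fun s => by dsimp only; ring)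
  have i1 : Integrable (fun t => (∫ s, halfKernel s t * φ s ∂μ) * ψ t) μ := by
    simpa only [e1] using hk1.integral_prod_right
  have i2 : Integrable (fun t => φ t * ∫ s, halfKernel s t * ψ s ∂μ) μ := by
    simpa only [e2] using hk2.integral_prod_left
  have hsum : (∫ t, (∫ s, halfKernel s t * φ s ∂μ) * ψ t ∂μ)
      + ∫ t, φ t * (∫ s, halfKernel s t * ψ s ∂μ) ∂μ = (∫ s, φ s ∂μ) * ∫ s, ψ s ∂μ := by
    have f1 : ∫ p, halfKernel p.1 p.2 * (φ p.1 * ψ p.2) ∂(μ.prod μ)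
        = ∫ t, (∫ s, halfKernel s t * φ s ∂μ) * ψ t ∂μ := by
      rw [integral_prod_symm _ hk1]; simp only [e1]
    have f2 : ∫ p, halfKernel p.2 p.1 * (φ p.1 * ψ p.2) ∂(μ.prod μ)
        = ∫ t, φ t * (∫ s, halfKernel s t * ψ s ∂μ) ∂μ := by
      rw [integral_prod _ hk2]; simp only [e2]
    rw [← f1, ← f2, ← integral_add hk1 hk2, ← integral_prod_mul]
    refine integral_congr_ae (Eventually.of_forall fun p => ?_)
    dsimp only
    rw [← add_mul, halfKernel_add_swap, one_mul]
  have e3 : (fun t => (A + ∫ s, halfKernel s t * φ s ∂μ) * ψ t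
        + φ t * (B + ∫ s, halfKernel s t * ψ s ∂μ))
      = fun t => (A * ψ t + B * φ t) + ((∫ s, halfKernel s t * φ s ∂μ) * ψ t
        + φ t * ∫ s, halfKernel s t * ψ s ∂μ) := by
    funext t; ring
  have i3 : Integrable (fun t => A * ψ t + B * φ t) μ := (hψ.const_mul A).add (hφ.const_mul B)
  have i12 : Integrable (fun t => (∫ s, halfKernel s t * φ s ∂μ) * ψ t
      + φ t * ∫ s, halfKernel s t * ψ s ∂μ) μ := i1.add i2
  rw [e3]
  refine ⟨i3.add i12, ?_⟩
  rw [integral_add i3 i12, integral_add i1 i2, hsum,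
    integral_add (hψ.const_mul A) (hφ.const_mul B), integral_const_mul, integral_const_mul]
  ring

/-! ### One-sided limits -/

/-- Left limits taken at points approaching `t` from the right converge to the right limit. -/
lemma tendsto_leftLim_nhdsGT {E : Type*} [TopologicalSpace E] [T3Space E] {u : ℝ → E}
    {t b : ℝ} (htb : t < b) {L : E} (h : Tendsto u (nhdsWithin t (Set.Ioi t)) (nhds L))
    (hl : ∀ x ∈ Set.Ioo t b, Tendsto u (nhdsWithin x (Set.Iio x)) (nhds (leftLim u x))) :
    Tendsto (leftLim u) (nhdsWithin t (Set.Ioi t)) (nhds L) := by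
  rw [(closed_nhds_basis L).tendsto_right_iff]
  rintro V ⟨hV, hVc⟩
  obtain ⟨e, he, hsub⟩ := mem_nhdsGT_iff_exists_Ioo_subset.1 (h hV)
  filter_upwards [Ioo_mem_nhdsGT (lt_min he htb)] with x hx
  refine hVc.mem_of_tendsto (hl x ⟨hx.1, hx.2.trans_le (min_le_right _ _)⟩) ?_
  filter_upwards [Ioo_mem_nhdsLT hx.1] with y hy
  exact hsub ⟨hy.1, hy.2.trans (hx.2.trans_le (min_le_left _ _))⟩

lemma tendsto_setIntegral_Ico_nhdsGT {ν : Measure ℝ} {g : ℝ → ℂ} {c t d : ℝ} (htd : t < d)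
    (hg : IntegrableOn g (Set.Icc c d) ν) :
    Tendsto (fun x => ∫ s in Set.Ico c x, g s ∂ν) (nhdsWithin t (Set.Ioi t))
      (nhds (∫ s in Set.Icc c t, g s ∂ν)) := by
  have key : Tendsto (fun x => ∫ s in Set.Icc c d, (Set.Iio x).indicator g s ∂ν)
      (nhdsWithin t (Set.Ioi t)) (nhds (∫ s in Set.Icc c d, (Set.Iic t).indicator g s ∂ν)) := by
    refine tendsto_integral_filter_of_dominated_convergence (fun s => ‖g s‖)
      (Eventually.of_forall fun x => (hg.indicator measurableSet_Iio).aestronglyMeasurable)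
      (Eventually.of_forall fun x => Eventually.of_forall fun s => norm_indicator_le_norm_self _ _)
      hg.norm (Eventually.of_forall fun s => ?_)
    refine tendsto_const_nhds.congr' ?_
    by_cases hs : s ≤ t
    · filter_upwards [self_mem_nhdsWithin] with x hx
      have : s < x := hs.trans_lt hx
      simp [hs, this]
    · filter_upwards [Ioo_mem_nhdsGT (not_le.1 hs)] with x hx
      simp [hs, hx.2.le]
  rw [setIntegral_indicator measurableSet_Iic] at key
  have h1 : Set.Icc c d ∩ Set.Iic t = Set.Icc c t := by
    ext s; simp only [Set.mem_inter_iff, Set.mem_Icc, Set.mem_Iic]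
    constructor
    · rintro ⟨⟨h1, h2⟩, h3⟩; exact ⟨h1, h3⟩
    · rintro ⟨h1, h2⟩; exact ⟨⟨h1, h2.trans htd.le⟩, h2⟩
  rw [h1] at key
  refine key.congr' ?_
  filter_upwards [Ioo_mem_nhdsGT htd] with x hx
  rw [setIntegral_indicator measurableSet_Iio]
  congr 2
  ext s; simp only [Set.mem_inter_iff, Set.mem_Icc, Set.mem_Iio, Set.mem_Ico]
  constructor
  · rintro ⟨⟨h1, h2⟩, h3⟩; exact ⟨h1, h3⟩
  · rintro ⟨h1, h2⟩; exact ⟨⟨h1, (h2.trans hx.2).le⟩, h2⟩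

/-! ### Balanced solutions as balanced primitives -/

/-- The density, with respect to `ν`, of the measure `du` of a solution `u`:
`J⁻¹((λ𝒲 − 𝒬)u + 𝒲f)`. -/
noncomputable def solDensity {n : ℕ} (J : Matrix (Fin n) (Fin n) ℂ)
    (Q W : ℝ → Matrix (Fin n) (Fin n) ℂ) (lam : ℂ) (f u : ℝ → Fin n → ℂ) (t : ℝ) : Fin n → ℂ :=
  (J⁻¹).mulVec ((lam • W t - Q t).mulVec (u t) + (W t).mulVec (f t))

section Solution

variable {a b : ℝ} {n : ℕ} {ν : Measure ℝ} {J : Matrix (Fin n) (Fin n) ℂ}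
  {Q W : ℝ → Matrix (Fin n) (Fin n) ℂ} {lam : ℂ} {f u : ℝ → Fin n → ℂ}

lemma integrableOn_mulVec_of_bv {A : ℝ → Matrix (Fin n) (Fin n) ℂ}
    (hA : ∀ (i j : Fin n) (c d : ℝ), a < c → d < b →
      IntegrableOn (fun x => A x i j) (Set.Icc c d) ν)
    (hu : LocallyBoundedVariationOn u (Set.Ioo a b)) {c d : ℝ}
    (hc : c ∈ Set.Ioo a b) (hd : d ∈ Set.Ioo a b) (i : Fin n) :
    IntegrableOn (fun t => (A t).mulVec (u t) i) (Set.Icc c d) ν := by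
  simp only [Matrix.mulVec, dotProduct]
  refine integrable_finsetSum _ fun j _ => ?_
  have h := bv_mul_integrableOn ((LipschitzWith.eval j).comp_locallyBoundedVariationOn hu)
    hc hd (hA i j c d hc.1 hd.2)
  exact h.congr (Eventually.of_forall fun t => mul_comm _ _)

lemma integrableOn_solDensity
    (hQ : ∀ (i j : Fin n) (c d : ℝ), a < c → d < b →
      IntegrableOn (fun x => Q x i j) (Set.Icc c d) ν)
    (hW : ∀ (i j : Fin n) (c d : ℝ), a < c → d < b →
      IntegrableOn (fun x => W x i j) (Set.Icc c d) ν)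
    (hf : ∀ c d : ℝ, a < c → d < b →
      IntegrableOn (fun x => (W x).mulVec (f x)) (Set.Icc c d) ν)
    (hu : LocallyBoundedVariationOn u (Set.Ioo a b)) {c d : ℝ}
    (hc : c ∈ Set.Ioo a b) (hd : d ∈ Set.Ioo a b) (i : Fin n) :
    IntegrableOn (fun t => solDensity J Q W lam f u t i) (Set.Icc c d) ν := by
  have h1 : ∀ (i j : Fin n) (c d : ℝ), a < c → d < b →
      IntegrableOn (fun x => (lam • W x - Q x) i j) (Set.Icc c d) ν := fun i j c d hc hd =>
    ((hW i j c d hc hd).const_mul lam).sub (hQ i j c d hc hd)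
  simp only [solDensity, Matrix.mulVec, dotProduct]
  refine integrable_finsetSum _ fun j _ => Integrable.const_mul ?_ _
  exact (integrableOn_mulVec_of_bv h1 hu hc hd j).add
    (Integrable.eval (hf c d hc.1 hd.2) j)

lemma leftLim_sol
    (hu : IsBalancedSolutionH a b ν J Q W lam f u)
    (hg : ∀ (c d : ℝ), c ∈ Set.Ioo a b → d ∈ Set.Ioo a b → ∀ i,
      IntegrableOn (fun t => solDensity J Q W lam f u t i) (Set.Icc c d) ν)
    {c d : ℝ} (hc : c ∈ Set.Ioo a b) (hd : d ∈ Set.Ioo a b) (hcd : c ≤ d)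
    (i : Fin n) :
    leftLim u d i = leftLim u c i + ∫ t in Set.Ico c d, solDensity J Q W lam f u t i ∂ν := by
  have h : leftLim u d i - leftLim u c i
      = (∫ t in Set.Ico c d, solDensity J Q W lam f u t ∂ν) i :=
    congrFun (hu.2.2 c d hc.1 hcd hd.2) i
  rw [eval_integral
    (fun j => (hg c d hc hd j).mono_set Set.Ico_subset_Icc_self) i] at h
  exact sub_eq_iff_eq_add'.1 h

lemma rightLim_sol
    (hu : IsBalancedSolutionH a b ν J Q W lam f u)
    (hg : ∀ (c d : ℝ), c ∈ Set.Ioo a b → d ∈ Set.Ioo a b → ∀ i,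
      IntegrableOn (fun t => solDensity J Q W lam f u t i) (Set.Icc c d) ν)
    {c t : ℝ} (hc : c ∈ Set.Ioo a b) (ht : t ∈ Set.Ioo a b) (hct : c ≤ t)
    (i : Fin n) :
    rightLim u t i = leftLim u c i + ∫ s in Set.Icc c t, solDensity J Q W lam f u s i ∂ν := by
  have h1 : Tendsto (leftLim u) (nhdsWithin t (Set.Ioi t)) (nhds (rightLim u t)) :=
    tendsto_leftLim_nhdsGT ht.2 (hu.2.1 t ht).2.1
      fun x hx => (hu.2.1 x ⟨ht.1.trans hx.1, hx.2⟩).1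
  obtain ⟨d, htd, hdb⟩ := exists_between ht.2
  have h2 := (tendsto_setIntegral_Ico_nhdsGT htd
    (hg c d hc ⟨ht.1.trans htd, hdb⟩ i)).const_add (leftLim u c i)
  refine tendsto_nhds_unique ((tendsto_pi_nhds.1 h1) i) (h2.congr' ?_)
  filter_upwards [Ioo_mem_nhdsGT ht.2] with x hx
  exact (leftLim_sol hu hg hc ⟨ht.1.trans hx.1, hx.2⟩ (hct.trans hx.1.le) i).symm

/-- A balanced solution is the balanced primitive of its density. -/
lemma sol_eq
    (hu : IsBalancedSolutionH a b ν J Q W lam f u)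
    (hg : ∀ (c d : ℝ), c ∈ Set.Ioo a b → d ∈ Set.Ioo a b → ∀ i,
      IntegrableOn (fun t => solDensity J Q W lam f u t i) (Set.Icc c d) ν)
    {c d t : ℝ} (hc : c ∈ Set.Ioo a b) (hd : d ∈ Set.Ioo a b) (ht : t ∈ Set.Ico c d)
    (i : Fin n) :
    u t i = leftLim u c i
      + ∫ s in Set.Ico c d, halfKernel s t * solDensity J Q W lam f u s i ∂ν := by
  have htab : t ∈ Set.Ioo a b := ⟨hc.1.trans_le ht.1, ht.2.trans hd.2⟩
  rw [integral_halfKernel_mul _ ((hg c d hc hd i).mono_set Set.Ico_subset_Icc_self),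
    Measure.restrict_restrict measurableSet_Iio, Measure.restrict_restrict measurableSet_Iic]
  have e1 : Set.Iio t ∩ Set.Ico c d = Set.Ico c t := by
    ext s; simp only [Set.mem_inter_iff, Set.mem_Iio, Set.mem_Ico]
    exact ⟨fun h => ⟨h.2.1, h.1⟩, fun h => ⟨h.2, h.1, h.2.trans ht.2⟩⟩
  have e2 : Set.Iic t ∩ Set.Ico c d = Set.Icc c t := by
    ext s; simp only [Set.mem_inter_iff, Set.mem_Iic, Set.mem_Ico, Set.mem_Icc]
    exact ⟨fun h => ⟨h.2.1, h.1⟩, fun h => ⟨h.2, h.1, h.2.trans_lt ht.2⟩⟩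
  rw [e1, e2]
  have h := congrFun (hu.2.1 t htab).2.2 i
  simp only [Pi.div_apply, Pi.add_apply, Pi.ofNat_apply] at h
  rw [h, leftLim_sol hu hg hc htab ht.1, rightLim_sol hu hg hc htab ht.1]
  ring

/-- A solution has no jump at a point without `ν`-mass. -/
lemma leftLim_sol_eq_self
    (hu : IsBalancedSolutionH a b ν J Q W lam f u)
    (hg : ∀ (c d : ℝ), c ∈ Set.Ioo a b → d ∈ Set.Ioo a b → ∀ i,
      IntegrableOn (fun t => solDensity J Q W lam f u t i) (Set.Icc c d) ν)
    {x : ℝ} (hx : x ∈ Set.Ioo a b) (hmass : ν {x} = 0) :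
    leftLim u x = u x := by
  funext i
  have h := congrFun (hu.2.1 x hx).2.2 i
  have hr := rightLim_sol hu hg hx hx le_rfl i
  rw [Set.Icc_self, Measure.restrict_eq_zero.2 hmass, integral_zero_measure, add_zero] at hr
  simp only [Pi.div_apply, Pi.add_apply, Pi.ofNat_apply] at h
  rw [h, hr]; ring

end Solution

/-! ### The Lagrange identity -/

/-- The two `q`- and `w`-terms in the product rule for `v* J u` cancel, since `λ𝒲 − 𝒬` is the
adjoint of `λ̄𝒲 − 𝒬` and `J* = −J`. -/
lemma star_dotProduct_solDensity {n : ℕ} {J : Matrix (Fin n) (Fin n) ℂ} (hJinv : IsUnit J)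
    (hJ : Jᴴ = -J) {Q W : ℝ → Matrix (Fin n) (Fin n) ℂ}
    (hQher : ∀ x : ℝ, (Q x).IsHermitian) (hWher : ∀ x : ℝ, (W x).IsHermitian)
    (lam : ℂ) (f u v : ℝ → Fin n → ℂ) (t : ℝ) :
    star (v t) ⬝ᵥ J.mulVec (solDensity J Q W lam f u t)
      + star (solDensity J Q W (starRingEnd ℂ lam) (fun _ => 0) v t) ⬝ᵥ J.mulVec (u t)
      = star (v t) ⬝ᵥ (W t).mulVec (f t) := by
  have hdet : IsUnit J.det := (Matrix.isUnit_iff_isUnit_det J).1 hJinv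
  have hJg : ∀ y, J.mulVec ((J⁻¹).mulVec y) = y := fun y => by
    rw [Matrix.mulVec_mulVec, Matrix.mul_nonsing_inv _ hdet, Matrix.one_mulVec]
  have hadj : ∀ (A : Matrix (Fin n) (Fin n) ℂ) (x y : Fin n → ℂ),
      star x ⬝ᵥ A.mulVec y = star (Aᴴ.mulVec x) ⬝ᵥ y := fun A x y => by
    rw [Matrix.star_mulVec, Matrix.conjTranspose_conjTranspose, Matrix.dotProduct_mulVec]
  have hM : (lam • W t - Q t)ᴴ = (starRingEnd ℂ lam) • W t - Q t := by
    rw [Matrix.conjTranspose_sub, Matrix.conjTranspose_smul, (hQher t).eq, (hWher t).eq]; rfl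
  rw [hadj J (solDensity J Q W (starRingEnd ℂ lam) (fun _ => 0) v t), hJ, Matrix.neg_mulVec,
    solDensity, solDensity, hJg, hJg, Matrix.mulVec_zero, add_zero, ← hM, star_neg,
    neg_dotProduct, ← hadj, dotProduct_add]
  ring

/-- Lagrange's identity: `v* J u` is the primitive of `v* 𝒲 f` when `u` solves the equation for
`λ` with inhomogeneity `f` and `v` the homogeneous equation for `λ̄`. -/
lemma lagrange_identity {a b : ℝ} {n : ℕ} {ν : Measure ℝ}
    (hν : ∀ c d : ℝ, a < c → d < b → ν (Set.Icc c d) < ⊤)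
    {J : Matrix (Fin n) (Fin n) ℂ} (hJinv : IsUnit J) (hJ : Jᴴ = -J)
    {Q W : ℝ → Matrix (Fin n) (Fin n) ℂ}
    (hQher : ∀ x : ℝ, (Q x).IsHermitian) (hWher : ∀ x : ℝ, (W x).IsHermitian)
    {lam : ℂ} {f u v : ℝ → Fin n → ℂ}
    (hu : IsBalancedSolutionH a b ν J Q W lam f u)
    (hv : IsBalancedSolutionH a b ν J Q W (starRingEnd ℂ lam) (fun _ => 0) v)
    (hgu : ∀ (c d : ℝ), c ∈ Set.Ioo a b → d ∈ Set.Ioo a b → ∀ i,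
      IntegrableOn (fun t => solDensity J Q W lam f u t i) (Set.Icc c d) ν)
    (hgv : ∀ (c d : ℝ), c ∈ Set.Ioo a b → d ∈ Set.Ioo a b → ∀ i,
      IntegrableOn (fun t => solDensity J Q W (starRingEnd ℂ lam) (fun _ => 0) v t i)
        (Set.Icc c d) ν)
    {c d : ℝ} (hc : c ∈ Set.Ioo a b) (hd : d ∈ Set.Ioo a b) (hcd : c ≤ d) :
    star (leftLim v d) ⬝ᵥ J.mulVec (leftLim u d) - star (leftLim v c) ⬝ᵥ J.mulVec (leftLim u c)
      = ∫ t in Set.Ico c d, star (v t) ⬝ᵥ (W t).mulVec (f t) ∂ν := by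
  set g := solDensity J Q W lam f u with hgdef
  set h := solDensity J Q W (starRingEnd ℂ lam) (fun _ => 0) v with hhdef
  have : IsFiniteMeasure (ν.restrict (Set.Ico c d)) :=
    ⟨by simpa using (measure_mono Set.Ico_subset_Icc_self).trans_lt (hν c d hc.1 hd.2)⟩
  have ig : ∀ j, Integrable (fun t => g t j) (ν.restrict (Set.Ico c d)) := fun j =>
    (hgu c d hc hd j).mono_set Set.Ico_subset_Icc_self
  have ih : ∀ j, Integrable (fun t => star (h t j)) (ν.restrict (Set.Ico c d)) := fun j =>
    (Complex.conjCLE.toContinuousLinearMap).integrable_comp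
      ((hgv c d hc hd j).mono_set Set.Ico_subset_Icc_self)
  have eu : ∀ j, ∀ t ∈ Set.Ico c d,
      leftLim u c j + ∫ s in Set.Ico c d, halfKernel s t * g s j ∂ν = u t j :=
    fun j t ht => (sol_eq hu hgu hc hd ht j).symm
  have ev : ∀ j, ∀ t ∈ Set.Ico c d,
      star (leftLim v c j) + ∫ s in Set.Ico c d, halfKernel s t * star (h s j) ∂ν
        = star (v t j) := by
    intro j t ht
    rw [sol_eq hv hgv hc hd ht j, star_add]
    congr 1
    refine Eq.trans ?_ integral_conj
    refine integral_congr_ae (Eventually.of_forall fun s => ?_)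
    change _ = star (halfKernel s t * h s j)
    rw [star_mul', star_halfKernel]
  have lv : ∀ j, star (leftLim v d j)
      = star (leftLim v c j) + ∫ s in Set.Ico c d, star (h s j) ∂ν := by
    intro j
    rw [leftLim_sol hv hgv hc hd hcd j, star_add]
    congr 1
    exact integral_conj.symm
  have key : ∀ i j,
      IntegrableOn (fun t => star (v t i) * g t j + star (h t i) * u t j) (Set.Ico c d) ν ∧
      star (leftLim v d i) * leftLim u d j - star (leftLim v c i) * leftLim u c j
        = ∫ t in Set.Ico c d, (star (v t i) * g t j + star (h t i) * u t j) ∂ν := by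
    intro i j
    obtain ⟨k1, k2⟩ := balanced_product_rule_s8 (ν.restrict (Set.Ico c d)) (ih i) (ig j)
      (star (leftLim v c i)) (leftLim u c j)
    have hcongr : ∀ t ∈ Set.Ico c d,
        (star (leftLim v c i) + ∫ s in Set.Ico c d, halfKernel s t * star (h s i) ∂ν) * g t j
          + star (h t i) * (leftLim u c j + ∫ s in Set.Ico c d, halfKernel s t * g s j ∂ν)
        = star (v t i) * g t j + star (h t i) * u t j := fun t ht => by
      rw [eu j t ht, ev i t ht]
    refine ⟨IntegrableOn.congr_fun k1 hcongr measurableSet_Ico, ?_⟩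
    rw [lv i, leftLim_sol hu hgu hc hd hcd j, k2]
    exact setIntegral_congr_fun measurableSet_Ico hcongr
  have hexp : ∀ x y : Fin n → ℂ,
      star x ⬝ᵥ J.mulVec y = ∑ i, ∑ j, J i j * (star (x i) * y j) := fun x y => by
    simp only [dotProduct, Matrix.mulVec, Finset.mul_sum, Pi.star_apply]
    exact Finset.sum_congr rfl fun i _ => Finset.sum_congr rfl fun j _ => by ring
  calc star (leftLim v d) ⬝ᵥ J.mulVec (leftLim u d)
        - star (leftLim v c) ⬝ᵥ J.mulVec (leftLim u c)
      = ∑ i, ∑ j, J i j *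
          (star (leftLim v d i) * leftLim u d j - star (leftLim v c i) * leftLim u c j) := by
        simp only [hexp, mul_sub, Finset.sum_sub_distrib]
    _ = ∑ i, ∑ j, ∫ t in Set.Ico c d,
          J i j * (star (v t i) * g t j + star (h t i) * u t j) ∂ν := by
        simp only [(key _ _).2, integral_const_mul]
    _ = ∫ t in Set.Ico c d,
          ∑ i, ∑ j, J i j * (star (v t i) * g t j + star (h t i) * u t j) ∂ν := by
        have hij : ∀ i j, Integrable
            (fun t => J i j * (star (v t i) * g t j + star (h t i) * u t j))
            (ν.restrict (Set.Ico c d)) := fun i j => (key i j).1.const_mul _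
        rw [integral_finsetSum _ fun i _ => integrable_finsetSum _ fun j _ => hij i j]
        exact Finset.sum_congr rfl fun i _ => (integral_finsetSum _ fun j _ => hij i j).symm
    _ = ∫ t in Set.Ico c d, star (v t) ⬝ᵥ (W t).mulVec (f t) ∂ν := by
        refine integral_congr_ae (Eventually.of_forall fun t => ?_)
        dsimp only
        rw [← star_dotProduct_solDensity hJinv hJ hQher hWher lam f u v t, ← hgdef, ← hhdef,
          hexp, hexp]
        simp only [mul_add, Finset.sum_add_distrib]

/-! ### Variation of constants -/

/-- **Variation of constants for the Hamiltonian system.**  Assume the jump matrices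
`2J ± ν({x})·(λ𝒲(x) − 𝒬(x))` and `2J ± ν({x})·(λ̄𝒲(x) − 𝒬(x))` are invertible on `(a,b)`,
let `x0` carry no `ν`-mass, and let `U(·,λ)`, `U(·,λ̄)` be the fundamental matrices of
`Ju' + qu = λwu` resp. `Ju' + qu = λ̄wu` with `U(x0,λ) = U(x0,λ̄) = I`.  If `u` is the
balanced solution of `Ju' + qu = λwu + wf` with `u(x0) = 0`, then for `x ≥ x0`:
`u⁻(x) = U⁻(x,λ)·J⁻¹·∫_{[x0,x)} U(t,λ̄)*·𝒲(t)·f(t) dν(t)`. -/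
theorem stmt_8 (a b : ℝ) (n : ℕ) (ν : Measure ℝ)
    (hν : ∀ c d : ℝ, a < c → d < b → ν (Set.Icc c d) < ⊤)
    (J : Matrix (Fin n) (Fin n) ℂ) (hJinv : IsUnit J) (hJ : Jᴴ = -J)
    (Q W : ℝ → Matrix (Fin n) (Fin n) ℂ)
    (hQher : ∀ x : ℝ, (Q x).IsHermitian)
    (hWpos : ∀ x : ℝ, (W x).PosSemidef)
    (hQ : ∀ (i j : Fin n) (c d : ℝ), a < c → d < b →
      IntegrableOn (fun x => Q x i j) (Set.Icc c d) ν)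
    (hW : ∀ (i j : Fin n) (c d : ℝ), a < c → d < b →
      IntegrableOn (fun x => W x i j) (Set.Icc c d) ν)
    (lam : ℂ)
    (hjump : ∀ x ∈ Set.Ioo a b,
      (IsUnit ((2 : ℂ) • J + (ν {x}).toReal • (lam • W x - Q x)) ∧
       IsUnit ((2 : ℂ) • J - (ν {x}).toReal • (lam • W x - Q x))) ∧
      (IsUnit ((2 : ℂ) • J + (ν {x}).toReal • ((starRingEnd ℂ lam) • W x - Q x)) ∧
       IsUnit ((2 : ℂ) • J - (ν {x}).toReal • ((starRingEnd ℂ lam) • W x - Q x))))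
    (x0 : ℝ) (hx0 : x0 ∈ Set.Ioo a b) (hx0mass : ν {x0} = 0)
    (U Uc : ℝ → Matrix (Fin n) (Fin n) ℂ)
    (hUcol : ∀ j : Fin n,
      IsBalancedSolutionH a b ν J Q W lam (fun _ => 0) (fun x i => U x i j))
    (hUccol : ∀ j : Fin n,
      IsBalancedSolutionH a b ν J Q W (starRingEnd ℂ lam) (fun _ => 0) (fun x i => Uc x i j))
    (hUx0 : U x0 = 1) (hUcx0 : Uc x0 = 1)
    (hUdet : ∀ x ∈ Set.Ioo a b, (U x).det ≠ 0 ∧ (Uc x).det ≠ 0)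
    (f : ℝ → Fin n → ℂ)
    (hf : ∀ c d : ℝ, a < c → d < b →
      IntegrableOn (fun x => (W x).mulVec (f x)) (Set.Icc c d) ν)
    (u : ℝ → Fin n → ℂ)
    (hu : IsBalancedSolutionH a b ν J Q W lam f u) (hu0 : u x0 = 0) :
    ∀ x ∈ Set.Ioo a b, x0 ≤ x →
      leftLim u x = (matLeftLim U x * J⁻¹).mulVec
        (∫ t in Set.Ico x0 x, ((Uc t)ᴴ).mulVec ((W t).mulVec (f t)) ∂ν) := by
  intro x hx hx0x
  have hWher : ∀ t, (W t).IsHermitian := fun t => (hWpos t).isHermitian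
  have h0 : ∀ c d : ℝ, a < c → d < b →
      IntegrableOn (fun x => (W x).mulVec ((fun _ => 0 : ℝ → Fin n → ℂ) x)) (Set.Icc c d) ν :=
    fun c d _ _ => by simp
  have gu : ∀ (c d : ℝ), c ∈ Set.Ioo a b → d ∈ Set.Ioo a b → ∀ i,
      IntegrableOn (fun t => solDensity J Q W lam f u t i) (Set.Icc c d) ν :=
    fun c d hc hd i => integrableOn_solDensity hQ hW hf hu.1 hc hd i
  have gU : ∀ k, ∀ (c d : ℝ), c ∈ Set.Ioo a b → d ∈ Set.Ioo a b → ∀ i,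
      IntegrableOn (fun t => solDensity J Q W lam (fun _ => 0) (fun x i => U x i k) t i)
        (Set.Icc c d) ν :=
    fun k c d hc hd i => integrableOn_solDensity hQ hW h0 (hUcol k).1 hc hd i
  have gUc : ∀ k, ∀ (c d : ℝ), c ∈ Set.Ioo a b → d ∈ Set.Ioo a b → ∀ i,
      IntegrableOn (fun t => solDensity J Q W (starRingEnd ℂ lam) (fun _ => 0)
        (fun x i => Uc x i k) t i) (Set.Icc c d) ν :=
    fun k c d hc hd i => integrableOn_solDensity hQ hW h0 (hUccol k).1 hc hd i
  -- entrywise left limits agree with the left limits of the columns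
  have hcol : ∀ {mu : ℂ} {V : ℝ → Matrix (Fin n) (Fin n) ℂ},
      (∀ j : Fin n, IsBalancedSolutionH a b ν J Q W mu (fun _ => 0) (fun x i => V x i j)) →
      ∀ i j, leftLim (fun x i => V x i j) x i = matLeftLim V x i j := by
    intro mu V hV i j
    exact (leftLim_eq_of_tendsto ((tendsto_pi_nhds.1 ((hV j).2.1 x hx).1) i)).symm
  have lu0 : leftLim u x0 = 0 := by rw [leftLim_sol_eq_self hu gu hx0 hx0mass, hu0]
  have lU0 : ∀ j, leftLim (fun x i => U x i j) x0 = fun i => (1 : Matrix (Fin n) (Fin n) ℂ) i j :=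
    fun j => by rw [leftLim_sol_eq_self (hUcol j) (gU j) hx0 hx0mass, hUx0]
  have lUc0 : ∀ j,
      leftLim (fun x i => Uc x i j) x0 = fun i => (1 : Matrix (Fin n) (Fin n) ℂ) i j :=
    fun j => by rw [leftLim_sol_eq_self (hUccol j) (gUc j) hx0 hx0mass, hUcx0]
  have hent : ∀ (A B C : Matrix (Fin n) (Fin n) ℂ) (i j : Fin n),
      (Aᴴ * (B * C)) i j = star (fun k => A k i) ⬝ᵥ B.mulVec (fun k => C k j) :=
    fun A B C i j => rfl
  -- `U⁻(·,λ̄)* J U⁻(·,λ)` is constant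
  have hwron : (matLeftLim Uc x)ᴴ * (J * matLeftLim U x) = J := by
    have h1 : (matLeftLim Uc x)ᴴ * (J * matLeftLim U x) = 1ᴴ * (J * 1) := by
      ext i j
      have h := lagrange_identity hν hJinv hJ hQher hWher (hUcol j) (hUccol i) (gU j) (gUc i)
        hx0 hx hx0x
      simp only [Matrix.mulVec_zero, dotProduct_zero, integral_zero] at h
      rw [hent, hent, ← lU0 j, ← lUc0 i, ← sub_eq_zero, ← h]
      congr 3
      · funext k; exact (hcol hUccol k i).symm
      · funext k; exact (hcol hUcol k j).symm
    simpa using h1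
  have hI : ((matLeftLim Uc x)ᴴ).mulVec (J.mulVec (leftLim u x))
      = ∫ t in Set.Ico x0 x, ((Uc t)ᴴ).mulVec ((W t).mulVec (f t)) ∂ν := by
    funext i
    have hInt : ∀ i, Integrable (fun t => ((Uc t)ᴴ).mulVec ((W t).mulVec (f t)) i)
        (ν.restrict (Set.Ico x0 x)) := by
      intro i
      have : IntegrableOn (fun t => ∑ k, star (Uc t k i) * (W t).mulVec (f t) k)
          (Set.Icc x0 x) ν := by
        refine integrable_finsetSum _ fun k _ => ?_
        have hbv : LocallyBoundedVariationOn (fun t => star (Uc t k i)) (Set.Ioo a b) :=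
          (Complex.conjCLE.toContinuousLinearMap.lipschitz).comp_locallyBoundedVariationOn
            ((LipschitzWith.eval k).comp_locallyBoundedVariationOn (hUccol i).1)
        exact bv_mul_integrableOn hbv hx0 hx (Integrable.eval (hf x0 x hx0.1 hx.2) k)
      exact this.mono_set Set.Ico_subset_Icc_self
    rw [eval_integral hInt i]
    have h := lagrange_identity hν hJinv hJ hQher hWher hu (hUccol i) gu (gUc i) hx0 hx hx0x
    rw [lu0, Matrix.mulVec_zero, dotProduct_zero, sub_zero] at h
    refine Eq.trans ?_ h
    change star (fun k => matLeftLim Uc x k i) ⬝ᵥ _ = _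
    congr 2
    funext k; exact (hcol hUccol k i).symm
  have hdet : IsUnit J.det := (Matrix.isUnit_iff_isUnit_det J).1 hJinv
  have hinv : (matLeftLim Uc x)ᴴ * (J * matLeftLim U x * J⁻¹) = 1 := by
    rw [← Matrix.mul_assoc, hwron, Matrix.mul_nonsing_inv _ hdet]
  have hinv' := mul_eq_one_comm.1 hinv
  rw [← hI, Matrix.mulVec_mulVec, Matrix.mulVec_mulVec]
  have : matLeftLim U x * J⁻¹ * ((matLeftLim Uc x)ᴴ * J) = 1 := by
    calc matLeftLim U x * J⁻¹ * ((matLeftLim Uc x)ᴴ * J)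
        = J⁻¹ * (J * matLeftLim U x * J⁻¹ * (matLeftLim Uc x)ᴴ) * J := by
          simp only [← Matrix.mul_assoc, Matrix.nonsing_inv_mul _ hdet, Matrix.one_mul]
      _ = 1 := by rw [hinv', Matrix.mul_one, Matrix.nonsing_inv_mul _ hdet]
  rw [Matrix.mul_assoc (matLeftLim U x * J⁻¹), this, Matrix.one_mulVec]
end

section
/- Finiteness of the exceptional set (Theorem A.4(c)): let A ∈ ℂ^{n×n} be invertible with det(A − q({x})) ≠ 0 for every x ∈ [s,t], and let K ⊆ ℂ be compact. Then the set {(x,λ) ∈ [s,t] × K : det(A + λ·w({x}) − q({x})) = 0} is finite. -/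
/-!
Countable additivity forces the singleton masses of a complex measure to tend to `0` along the
cofinite filter (`tendsto_singleton_cofinite`). As `det A ≠ 0`, compactness of `K` gives a
neighbourhood of `(0, 0)` such that `det (A + λ W - Q) ≠ 0` for all `(W, Q)` in it and all `λ ∈ K`;
hence only finitely many `x` can occur in the exceptional set. For each of them the determinant is a
polynomial in `λ` that does not vanish at `λ = 0`, so it has finitely many roots.
-/

open MeasureTheory

/-- The matrix of singleton masses `μ({x})` of a matrix of complex measures. -/
noncomputable def jumpMat {n : ℕ} {α : Type*} [MeasurableSpace α]
    (μ : Matrix (Fin n) (Fin n) (VectorMeasure α ℂ)) (x : α) :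
    Matrix (Fin n) (Fin n) ℂ :=
  Matrix.of fun i j => μ i j {x}

/-- The atoms of a complex measure of mass bounded below are finite in number: the masses of an
infinite sequence of distinct atoms form a convergent series. -/
lemma tendsto_singleton_cofinite (μ : VectorMeasure ℝ ℂ) :
    Filter.Tendsto (fun x : ℝ => μ {x}) Filter.cofinite (nhds 0) := by
  intro U hU
  by_contra h
  have hinf : ((fun x : ℝ => μ {x}) ⁻¹' U)ᶜ.Infinite := h
  let e := hinf.natEmbedding
  have hsum : HasSum (fun k => μ {(e k : ℝ)}) (μ (⋃ k, {(e k : ℝ)})) := by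
    refine μ.m_iUnion (fun k => measurableSet_singleton _) fun i j hij => ?_
    simpa [Function.onFun, Subtype.ext_iff] using fun h => hij (e.injective (Subtype.ext h))
  obtain ⟨k, hk⟩ := (hsum.summable.tendsto_atTop_zero.eventually hU).exists
  exact (e k).2 hk

lemma tendsto_jumpMat_cofinite {n : ℕ} (μ : Matrix (Fin n) (Fin n) (VectorMeasure ℝ ℂ)) :
    Filter.Tendsto (jumpMat μ) Filter.cofinite (nhds 0) :=
  tendsto_pi_nhds.2 fun i => tendsto_pi_nhds.2 fun j => tendsto_singleton_cofinite (μ i j)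

/-- A matrix pencil `B + l W` with `B` nonsingular is singular for finitely many `l` only. -/
lemma finite_det_pencil {n : ℕ} (B W : Matrix (Fin n) (Fin n) ℂ) (hB : B.det ≠ 0) :
    {l : ℂ | (B + l • W).det = 0}.Finite := by
  let P : Polynomial ℂ :=
    (B.map Polynomial.C + (Polynomial.X : Polynomial ℂ) • W.map Polynomial.C).det
  have hP (l : ℂ) : P.eval l = (B + l • W).det := by
    rw [← Polynomial.coe_evalRingHom, RingHom.map_det]
    congr 1
    ext i j
    simp
    ring
  have hP0 : P ≠ 0 := by
    intro h
    have h0 := hP 0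
    simp [h] at h0
    exact hB h0.symm
  refine (Polynomial.finite_setOfPred_isRoot hP0).subset fun l hl => ?_
  exact (hP l).trans hl

theorem stmt_10 (n : ℕ) (s t : ℝ)
    (q w : Matrix (Fin n) (Fin n) (VectorMeasure ℝ ℂ))
    (A : Matrix (Fin n) (Fin n) ℂ) (hA : IsUnit A)
    (hq : ∀ x ∈ Set.Icc s t, (A - jumpMat q x).det ≠ 0)
    (K : Set ℂ) (hK : IsCompact K) :
    {p : ℝ × ℂ | p.1 ∈ Set.Icc s t ∧ p.2 ∈ K ∧
      (A + p.2 • jumpMat w p.1 - jumpMat q p.1).det = 0}.Finite := by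
  have hdet : A.det ≠ 0 := ((Matrix.isUnit_iff_isUnit_det A).1 hA).ne_zero
  have hnear : ∀ᶠ M : Matrix (Fin n) (Fin n) ℂ × Matrix (Fin n) (Fin n) ℂ in nhds (0, 0),
      ∀ l ∈ K, (A + l • M.1 - M.2).det ≠ 0 := by
    refine hK.eventually_forall_of_forall_eventually fun l _ => ?_
    have hc : Continuous fun z : (Matrix (Fin n) (Fin n) ℂ × Matrix (Fin n) (Fin n) ℂ) × ℂ =>
        (A + z.2 • z.1.1 - z.1.2).det := by fun_prop
    exact hc.continuousAt.eventually_ne (by simpa using hdet)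
  have hfin : {x : ℝ | ¬ ∀ l ∈ K, (A + l • jumpMat w x - jumpMat q x).det ≠ 0}.Finite :=
    Filter.eventually_cofinite.1 <|
      ((tendsto_jumpMat_cofinite w).prodMk_nhds (tendsto_jumpMat_cofinite q)).eventually hnear
  refine ((hfin.inter_of_left (Set.Icc s t)).biUnion (t := fun x =>
    Prod.mk x '' {l : ℂ | (A - jumpMat q x + l • jumpMat w x).det = 0}) fun x hx =>
      (finite_det_pencil _ _ (hq x hx.2)).image _).subset ?_
  rintro ⟨x, l⟩ ⟨hx, hl, h⟩
  refine Set.mem_biUnion (x := x) ⟨fun hall => hall l hl h, hx⟩ ⟨l, ?_, rfl⟩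
  rwa [Set.mem_ofPred_eq, sub_add_eq_add_sub]
end
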